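/- arXiv:1610.00370 — 11 statements merged into one kernel-verified Lean document; each statement's English description precedes it below -/
import Mathlib

section
/- Let Q = ∏_{n∈ℕ}[0,1] be the Hilbert cube and ι : Q → Q the map ι((x_n)_{n∈ℕ}) = (x_n/2 + 1/4)_{n∈ℕ}. Let M, N ⊆ Q be compact subsets and let R ⊆ M³ and S ⊆ N³ be closed. Then there exists a homeomorphism h : M → N with (h×h×h)[R] = S if and only if there exists a homeomorphism g of Q onto itself such that g[ι[M]] = ι[N] and (g×g×g)[(ι×ι×ι)[R]] = (ι×ι×ι)[S]. -/
open Set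

/-- The Hilbert cube `Q = ∏_{n ∈ ℕ} [0,1]`. -/
abbrev HilbertCube : Type := ℕ → unitInterval

/-- The map `ι((x_n)_n) = (x_n/2 + 1/4)_n` on the Hilbert cube. -/
noncomputable def iotaHC : HilbertCube → HilbertCube := fun x n =>
  ⟨(x n : ℝ) / 2 + 1 / 4, by
    constructor
    · have h := (x n).2.1; linarith
    · have h := (x n).2.2; linarith⟩

/-- The coordinatewise action of a map on triples. -/
def cube3 {A B : Type*} (f : A → B) : A × A × A → B × B × B :=
  fun p => (f p.1, f p.2.1, f p.2.2)

noncomputable section HCaux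

def actR (r s : ℝ) : ℝ := Real.exp r * s / (Real.exp r * s + (1 - s))

lemma actR_den (r : ℝ) {s : ℝ} (h : s ∈ Icc (0:ℝ) 1) : 0 < Real.exp r * s + (1 - s) := by
  have he := Real.exp_pos r
  rcases h.1.eq_or_lt with h0 | h0
  · rw [← h0]; simp
  · have := mul_pos he h0
    linarith [h.2]

lemma actR_mem (r : ℝ) {s : ℝ} (h : s ∈ Icc (0:ℝ) 1) : actR r s ∈ Icc (0:ℝ) 1 := by
  have hd := actR_den r h
  have := mul_nonneg (Real.exp_pos r).le h.1
  refine ⟨div_nonneg this hd.le, ?_⟩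
  unfold actR
  rw [div_le_one hd]; linarith [h.2]

lemma actR_add (r t : ℝ) {s : ℝ} (h : s ∈ Icc (0:ℝ) 1) : actR r (actR t s) = actR (r + t) s := by
  have h1 := actR_den t h
  have h2 := actR_den (r + t) h
  have h3 := actR_den r (actR_mem t h)
  unfold actR at h3 ⊢
  rw [div_eq_div_iff h3.ne' h2.ne', Real.exp_add]
  field_simp
  ring

lemma actR_zero (s : ℝ) : actR 0 s = s := by simp [actR]

def act (r : ℝ) (s : unitInterval) : unitInterval := ⟨actR r s, actR_mem r s.2⟩

lemma act_add (r t : ℝ) (s : unitInterval) : act r (act t s) = act (r + t) s :=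
  Subtype.ext (actR_add r t s.2)

lemma act_zero (s : unitInterval) : act 0 s = s := Subtype.ext (actR_zero s)

lemma continuous_act : Continuous (fun p : ℝ × unitInterval => act p.1 p.2) := by
  refine Continuous.subtype_mk ?_ _
  unfold actR
  refine Continuous.div (by fun_prop) (by fun_prop) ?_
  intro p; exact (actR_den p.1 p.2.2).ne'

def actQ (r : ℕ → ℝ) (q : HilbertCube) : HilbertCube := fun n => act (r n) (q n)

lemma actQ_add (r t : ℕ → ℝ) (s : HilbertCube) : actQ r (actQ t s) = actQ (r + t) s :=
  funext fun _ => act_add _ _ _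

lemma actQ_zero (s : HilbertCube) : actQ 0 s = s := funext fun _ => act_zero _

lemma continuous_actQ : Continuous (fun p : (ℕ → ℝ) × HilbertCube => actQ p.1 p.2) := by
  refine continuous_pi fun n => ?_
  exact continuous_act.comp
    (f := fun p : (ℕ → ℝ) × HilbertCube => (p.1 n, p.2 n)) (by fun_prop)

/-- fibrewise shear -/
def shear (r : HilbertCube → ℕ → ℝ) (hr : Continuous r) :
    (HilbertCube × HilbertCube) ≃ₜ (HilbertCube × HilbertCube) where
  toFun p := (p.1, actQ (r p.1) p.2)
  invFun p := (p.1, actQ (-r p.1) p.2)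
  left_inv p := by simp [actQ_add, actQ_zero]
  right_inv p := by simp [actQ_add, actQ_zero]
  continuous_toFun := by
    refine continuous_fst.prodMk (continuous_actQ.comp
      (f := fun p : HilbertCube × HilbertCube => (r p.1, p.2)) (by fun_prop))
  continuous_invFun := by
    refine continuous_fst.prodMk (continuous_actQ.comp
      (f := fun p : HilbertCube × HilbertCube => (-r p.1, p.2)) (by fun_prop))

def splitHC : HilbertCube ≃ₜ (HilbertCube × HilbertCube) where
  toFun x := (fun n => x (2 * n), fun n => x (2 * n + 1))
  invFun p := fun n => if n % 2 = 0 then p.1 (n / 2) else p.2 (n / 2)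
  left_inv x := by
    funext n
    dsimp only
    split_ifs with h
    · congr 1; omega
    · congr 1; omega
  right_inv p := by
    refine Prod.ext (funext fun n => ?_) (funext fun n => ?_)
    · have h : (2 * n) % 2 = 0 := by omega
      have h' : (2 * n) / 2 = n := by omega
      simp only [h, h', if_true]
    · have h : (2 * n + 1) % 2 = 1 := by omega
      have h' : (2 * n + 1) / 2 = n := by omega
      simp [h, h']
  continuous_toFun := by fun_prop
  continuous_invFun := by
    refine continuous_pi fun n => ?_
    split_ifs <;> fun_prop

def oHC : HilbertCube := fun _ => ⟨1/2, by norm_num, by norm_num⟩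

lemma actQ_o_inj {r t : ℕ → ℝ} (h : actQ r oHC = actQ t oHC) : r = t := by
  funext n
  have h1 := congrArg Subtype.val (congrFun h n)
  simp only [actQ, act, actR, oHC] at h1
  have p1 := Real.exp_pos (r n)
  have p2 := Real.exp_pos (t n)
  rw [div_eq_div_iff (by norm_num; linarith) (by norm_num; linarith)] at h1
  exact Real.exp_injective (by nlinarith)

lemma ext_lemma {T : Type} [TopologicalSpace T] [CompactSpace T] (b : T → HilbertCube)
    (hb : Continuous b) (hi : Function.Injective b) (c : T → ℕ → ℝ) (hc : Continuous c) :
    ∃ U : HilbertCube → ℕ → ℝ, Continuous U ∧ ∀ t, U (b t) = c t := by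
  obtain ⟨g, hg⟩ := ContinuousMap.exists_extension (Y := ℕ → ℝ)
    (hb.isClosedEmbedding hi) (⟨c, hc⟩ : C(T, ℕ → ℝ))
  exact ⟨g, g.continuous, fun t => congrArg (fun f : C(T, ℕ → ℝ) => f t) hg⟩

def ell (x : HilbertCube) (n : ℕ) : ℝ :=
  Real.log ((iotaHC x n : ℝ) / (1 - (iotaHC x n : ℝ)))

lemma iota_val (x : HilbertCube) (n : ℕ) : (iotaHC x n : ℝ) = (x n : ℝ) / 2 + 1 / 4 := rfl

lemma iota_bd (x : HilbertCube) (n : ℕ) :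
    1/4 ≤ (iotaHC x n : ℝ) ∧ (iotaHC x n : ℝ) ≤ 3/4 := by
  have := (x n).2.1
  have := (x n).2.2
  rw [iota_val]; constructor <;> linarith

lemma continuous_iota : Continuous iotaHC := by
  refine continuous_pi fun n => Continuous.subtype_mk ?_ _
  fun_prop

lemma iota_inj : Function.Injective iotaHC := by
  intro x y h
  funext n
  have := congrArg Subtype.val (congrFun h n)
  simp only [iota_val] at this
  exact Subtype.ext (by linarith)

lemma continuous_ell : Continuous ell := by
  refine continuous_pi fun n => ?_
  have hc : Continuous fun x : HilbertCube => (iotaHC x n : ℝ) :=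
    continuous_subtype_val.comp ((continuous_apply n).comp continuous_iota)
  refine Continuous.log (hc.div (by fun_prop) ?_) ?_
  · intro x; have := iota_bd x n; linarith
  · intro x; have := iota_bd x n
    exact (div_pos (by linarith) (by linarith)).ne'

lemma ell_bd (x : HilbertCube) (n : ℕ) : |ell x n| ≤ Real.log 3 := by
  have h := iota_bd x n
  have h1 : 0 < 1 - (iotaHC x n : ℝ) := by linarith
  rw [abs_le, ← Real.log_inv]
  constructor
  · apply Real.log_le_log (by norm_num)
    rw [le_div_iff₀ h1]; linarith
  · apply Real.log_le_log (div_pos (by linarith) h1)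
    rw [div_le_iff₀ h1]; linarith

lemma act_ell (x : HilbertCube) (n : ℕ) : act (ell x n) (oHC n) = iotaHC x n := by
  apply Subtype.ext
  have h := iota_bd x n
  have h1 : 0 < 1 - (iotaHC x n : ℝ) := by linarith
  simp only [act, actR, ell, oHC]
  rw [Real.exp_log (div_pos (by linarith) h1)]
  generalize (iotaHC x n : ℝ) = a at *
  have : a / (1 - a) * (1/2) + (1 - 1/2) = 1 / (2 * (1 - a)) := by field_simp; ring
  rw [this]; field_simp

def rEnc (u : HilbertCube) (n : ℕ) : ℝ := n * (u n.unpair.1 : ℝ)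

lemma continuous_rEnc : Continuous rEnc := by
  refine continuous_pi fun n => ?_
  unfold rEnc; fun_prop

def lam (x : HilbertCube) (n : ℕ) : ℝ :=
  n * (iotaHC x (2 * n.unpair.1) : ℝ) + ell x (2 * n + 1)

lemma continuous_lam : Continuous lam := by
  refine continuous_pi fun n => ?_
  have h1 : Continuous fun x : HilbertCube => (iotaHC x (2 * n.unpair.1) : ℝ) :=
    continuous_subtype_val.comp ((continuous_apply _).comp continuous_iota)
  have h2 : Continuous fun x : HilbertCube => ell x (2 * n + 1) :=
    (continuous_apply _).comp continuous_ell
  unfold lam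
  fun_prop

lemma lam_inj : Function.Injective lam := by
  intro x y h
  apply iota_inj
  have even : ∀ k, (iotaHC x (2 * k) : ℝ) = iotaHC y (2 * k) := by
    intro k
    by_contra hne
    have hpos : 0 < |(iotaHC x (2 * k) : ℝ) - iotaHC y (2 * k)| := abs_pos.2 (sub_ne_zero.2 hne)
    obtain ⟨m, hm⟩ := exists_nat_gt (2 * Real.log 3 / |(iotaHC x (2 * k) : ℝ) - iotaHC y (2 * k)|)
    rw [div_lt_iff₀ hpos] at hm
    have hmn : (m : ℝ) ≤ (Nat.pair k m : ℝ) := by exact_mod_cast Nat.right_le_pair k m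
    have h1 := congrFun h (Nat.pair k m)
    simp only [lam, Nat.unpair_pair] at h1
    have b1 := ell_bd x (2 * Nat.pair k m + 1)
    have b2 := ell_bd y (2 * Nat.pair k m + 1)
    generalize (Nat.pair k m : ℝ) = P at *
    have h2 : P * ((iotaHC x (2 * k) : ℝ) - iotaHC y (2 * k)) =
      ell y (2 * Nat.pair k m + 1) - ell x (2 * Nat.pair k m + 1) := by linarith
    have h3 : |P| * |(iotaHC x (2 * k) : ℝ) - iotaHC y (2 * k)| ≤ 2 * Real.log 3 := by
      rw [← abs_mul, h2]
      refine (abs_sub _ _).trans ?_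
      linarith
    have h4 := mul_le_mul_of_nonneg_right (hmn.trans (le_abs_self P)) hpos.le
    linarith
  funext n
  rcases Nat.even_or_odd' n with ⟨k, rfl | rfl⟩
  · exact Subtype.ext (even k)
  · have h1 := congrFun h k
    simp only [lam, even] at h1
    rw [← act_ell, ← act_ell, add_left_cancel h1]

lemma exists_flat : ∃ F : HilbertCube ≃ₜ (HilbertCube × HilbertCube),
    ∀ x, F (iotaHC x) = (oHC, actQ (lam x) oHC) := by
  have hS : Continuous fun x => actQ (lam x) oHC :=
    continuous_actQ.comp (f := fun x => (lam x, oHC)) (by have := continuous_lam; fun_prop)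
  have hSi : Function.Injective fun x => actQ (lam x) oHC :=
    fun x y h => lam_inj (actQ_o_inj h)
  obtain ⟨U, hU, hUe⟩ := ext_lemma _ hS hSi (fun x n => - ell x (2 * n)) (by
    refine continuous_pi fun n => ?_
    exact ((continuous_apply (2 * n)).comp continuous_ell).neg)
  refine ⟨(((splitHC.trans (shear rEnc continuous_rEnc)).trans
    (Homeomorph.prodComm _ _)).trans (shear U hU)).trans (Homeomorph.prodComm _ _), ?_⟩
  intro x
  have e1 : (shear rEnc continuous_rEnc) (splitHC (iotaHC x)) =
      (fun n => iotaHC x (2 * n), actQ (lam x) oHC) := by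
    refine Prod.ext rfl (funext fun n => ?_)
    change act (rEnc (fun n => iotaHC x (2 * n)) n) (iotaHC x (2 * n + 1)) = act (lam x n) (oHC n)
    rw [← act_ell x (2 * n + 1), show oHC (2 * n + 1) = oHC n from rfl, act_add]
    rfl
  simp only [Homeomorph.trans_apply, e1]
  refine Prod.ext ?_ rfl
  change actQ (U (actQ (lam x) oHC)) (fun n => iotaHC x (2 * n)) = oHC
  have := hUe x
  rw [this]
  funext n
  change act (- ell x (2 * n)) (iotaHC x (2 * n)) = oHC n
  rw [← act_ell x (2 * n), act_add, neg_add_cancel, act_zero]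
  rfl

lemma exists_ext (M N : Set HilbertCube) (hM : IsCompact M) (h : M ≃ₜ N) :
    ∃ g : HilbertCube ≃ₜ HilbertCube, ∀ x : M, g (iotaHC x) = iotaHC (h x) := by
  obtain ⟨F, hF⟩ := exists_flat
  haveI : CompactSpace M := isCompact_iff_compactSpace.1 hM
  have hl1 : Continuous fun x : M => lam x := continuous_lam.comp continuous_subtype_val
  have hl2 : Continuous fun x : M => lam (h x) :=
    continuous_lam.comp (continuous_subtype_val.comp h.continuous)
  have hS1 : Continuous fun x : M => actQ (lam x) oHC :=
    continuous_actQ.comp (f := fun x : M => (lam x, oHC)) (by fun_prop)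
  have hS2 : Continuous fun x : M => actQ (lam (h x)) oHC :=
    continuous_actQ.comp (f := fun x : M => (lam (h x), oHC)) (by fun_prop)
  obtain ⟨U, hU, hUe⟩ := ext_lemma _ hS1
    (fun x y e => Subtype.ext (lam_inj (actQ_o_inj e))) _ hl2
  obtain ⟨V, hV, hVe⟩ := ext_lemma _ hS2
    (fun x y e => h.injective (Subtype.ext (lam_inj (actQ_o_inj e)))) _ hl1.neg
  refine ⟨(((((F.trans (Homeomorph.prodComm _ _)).trans (shear U hU)).trans
    (Homeomorph.prodComm _ _)).trans (shear V hV)).trans (Homeomorph.prodComm _ _)).trans F.symm, ?_⟩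
  intro x
  simp only [Homeomorph.trans_apply, hF]
  rw [Homeomorph.symm_apply_eq, hF]
  change (actQ (V (actQ (U (actQ (lam x) oHC)) oHC)) (actQ (lam x) oHC),
    actQ (U (actQ (lam x) oHC)) oHC) = _
  have h1 := hUe x
  have h2 := hVe x
  rw [h1, h2, actQ_add]
  simp [actQ_zero]

lemma cube3_inj {A B : Type*} {f : A → B} (hf : Function.Injective f) :
    Function.Injective (cube3 f) := by
  rintro ⟨a, b, c⟩ ⟨a', b', c'⟩ h
  simp only [cube3, Prod.mk.injEq] at h ⊢
  exact ⟨hf h.1, hf h.2.1, hf h.2.2⟩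

lemma image_lemma (M N : Set HilbertCube)
    (R : Set (HilbertCube × HilbertCube × HilbertCube))
    (hRM : R ⊆ M ×ˢ M ×ˢ M) (h : M ≃ₜ N) (g : HilbertCube ≃ₜ HilbertCube)
    (hg : ∀ x : M, g (iotaHC x) = iotaHC (h x)) :
    cube3 g '' (cube3 iotaHC '' R) = cube3 iotaHC ''
      {p : HilbertCube × HilbertCube × HilbertCube |
          ∃ x y z : M, ((x : HilbertCube), (y : HilbertCube), (z : HilbertCube)) ∈ R ∧
            p = ((h x : HilbertCube), (h y : HilbertCube), (h z : HilbertCube))} := by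
  ext p
  constructor
  · rintro ⟨_, ⟨⟨x, y, z⟩, hr, rfl⟩, rfl⟩
    obtain ⟨hx, hy, hz⟩ := hRM hr
    refine ⟨_, ⟨⟨x, hx⟩, ⟨y, hy⟩, ⟨z, hz⟩, hr, rfl⟩, ?_⟩
    simp only [cube3, ← hg]
  · rintro ⟨_, ⟨x, y, z, hr, rfl⟩, rfl⟩
    refine ⟨_, ⟨_, hr, rfl⟩, ?_⟩
    simp only [cube3, hg]

end HCaux

/-- For compact `M, N ⊆ Q` and closed `R ⊆ M³`, `S ⊆ N³`, there is a homeomorphism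
`h : M → N` with `(h×h×h)[R] = S` iff there is a homeomorphism `g` of `Q` with
`g[ι[M]] = ι[N]` and `(g×g×g)[(ι×ι×ι)[R]] = (ι×ι×ι)[S]`. -/
theorem homeo_iso_iff_ambient_homeo
    (M N : Set HilbertCube) (hM : IsCompact M) (hN : IsCompact N)
    (R S : Set (HilbertCube × HilbertCube × HilbertCube))
    (hRM : R ⊆ M ×ˢ M ×ˢ M) (hSN : S ⊆ N ×ˢ N ×ˢ N)
    (hR : IsClosed R) (hS : IsClosed S) :
    (∃ h : M ≃ₜ N,
        {p : HilbertCube × HilbertCube × HilbertCube |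
          ∃ x y z : M, ((x : HilbertCube), (y : HilbertCube), (z : HilbertCube)) ∈ R ∧
            p = ((h x : HilbertCube), (h y : HilbertCube), (h z : HilbertCube))} = S) ↔
    (∃ g : HilbertCube ≃ₜ HilbertCube,
        g '' (iotaHC '' M) = iotaHC '' N ∧
        cube3 g '' (cube3 iotaHC '' R) = cube3 iotaHC '' S) := by
  constructor
  · rintro ⟨h, hh⟩
    obtain ⟨g, hg⟩ := exists_ext M N hM h
    refine ⟨g, ?_, ?_⟩
    · ext p
      constructor
      · rintro ⟨_, ⟨x, hx, rfl⟩, rfl⟩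
        exact ⟨h ⟨x, hx⟩, (h ⟨x, hx⟩).2, (hg ⟨x, hx⟩).symm⟩
      · rintro ⟨y, hy, rfl⟩
        refine ⟨_, ⟨h.symm ⟨y, hy⟩, (h.symm ⟨y, hy⟩).2, rfl⟩, ?_⟩
        rw [hg, Homeomorph.apply_symm_apply]
    · rw [image_lemma M N R hRM h g hg, hh]
  · rintro ⟨g, h1, h2⟩
    have hi : Topology.IsEmbedding iotaHC := (continuous_iota.isClosedEmbedding iota_inj).isEmbedding
    let h : M ≃ₜ N := (((hi.homeomorphImage M).trans (g.image _)).trans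
      (Homeomorph.setCongr h1)).trans (hi.homeomorphImage N).symm
    have hg : ∀ x : M, g (iotaHC x) = iotaHC (h x) := by
      intro x
      have : (hi.homeomorphImage N) (h x) = Homeomorph.setCongr h1 (g.image _ (hi.homeomorphImage M x)) := by
        simp [h]
      exact (congrArg Subtype.val this).symm
    refine ⟨h, (cube3_inj iota_inj).image_injective ?_⟩
    rw [← h2, image_lemma M N R hRM h g hg]
end

section
/- Let G and H be locally compact, non-compact Polish groups, let G* = G ∪ {∞_G} and H* = H ∪ {∞_H} be their one-point (Alexandrov) compactifications, and let R_G ⊆ (G*)³ be the closure in (G*)³ of the set {(g, f, gf) : g, f ∈ G}, and R_H ⊆ (H*)³ analogously. Then G and H are isomorphic as topological groups if and only if there exists a homeomorphism φ : G* → H* such that φ(∞_G) = ∞_H and (φ×φ×φ)[R_G] = R_H. -/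
open OnePoint

theorem mem_closure_graph_iff {G : Type*} [Group G] [TopologicalSpace G] [IsTopologicalGroup G]
    [T2Space G] (a b c : G) :
    ((a : OnePoint G), (b : OnePoint G), (c : OnePoint G)) ∈
      closure {p : OnePoint G × OnePoint G × OnePoint G |
          ∃ g f : G, p = ((g : OnePoint G), (f : OnePoint G), ((g * f : G) : OnePoint G))} ↔
      c = a * b := by
  constructor
  · intro h
    have hc : Topology.IsInducing ((↑) : G → OnePoint G) :=
      OnePoint.isOpenEmbedding_coe.isInducing
    have hi := hc.prodMap (hc.prodMap hc)
    have hcl : IsClosed {p : G × G × G | p.2.2 = p.1 * p.2.1} :=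
      isClosed_eq (by fun_prop) (by fun_prop)
    have key := hi.closure_eq_preimage_closure_image {p : G × G × G | p.2.2 = p.1 * p.2.1}
    rw [hcl.closure_eq] at key
    have hm : (a, b, c) ∈ {p : G × G × G | p.2.2 = p.1 * p.2.1} := by
      rw [key]
      refine closure_mono ?_ h
      rintro _ ⟨g, f, rfl⟩
      exact ⟨(g, f, g * f), rfl, rfl⟩
    exact hm
  · rintro rfl
    exact subset_closure ⟨a, b, rfl⟩

/-- Two locally compact, non-compact Polish groups `G` and `H` are isomorphic as
topological groups iff there is a homeomorphism `φ` of their one-point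
compactifications with `φ(∞) = ∞` mapping the closure of the multiplication graph
of `G` onto that of `H`. -/
theorem lc_group_iso_iff_onePoint_structure_iso
    {G H : Type*} [Group G] [TopologicalSpace G] [IsTopologicalGroup G] [PolishSpace G]
    [LocallyCompactSpace G] [NoncompactSpace G]
    [Group H] [TopologicalSpace H] [IsTopologicalGroup H] [PolishSpace H]
    [LocallyCompactSpace H] [NoncompactSpace H] :
    (∃ φ : G ≃* H, Continuous φ ∧ Continuous φ.symm) ↔
    (∃ ψ : OnePoint G ≃ₜ OnePoint H,
      ψ ∞ = ∞ ∧
      cube3 ψ '' closure {p : OnePoint G × OnePoint G × OnePoint G |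
          ∃ g f : G, p = ((g : OnePoint G), (f : OnePoint G), ((g * f : G) : OnePoint G))} =
        closure {p : OnePoint H × OnePoint H × OnePoint H |
          ∃ g f : H, p = ((g : OnePoint H), (f : OnePoint H), ((g * f : H) : OnePoint H))}) := by
  constructor
  · rintro ⟨φ, h1, h2⟩
    let e : G ≃ₜ H := { φ.toEquiv with continuous_toFun := h1, continuous_invFun := h2 }
    have he : ∀ g : G, e.onePointCongr (g : OnePoint G) = ((φ g : H) : OnePoint H) := fun g => rfl
    refine ⟨e.onePointCongr, rfl, ?_⟩
    have hcube : cube3 e.onePointCongr =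
        (e.onePointCongr.prodCongr (e.onePointCongr.prodCongr e.onePointCongr)) := rfl
    rw [hcube, Homeomorph.image_closure, ← hcube]
    congr 1
    ext p
    constructor
    · rintro ⟨_, ⟨g, f, rfl⟩, rfl⟩
      refine ⟨φ g, φ f, ?_⟩
      simp only [cube3, he, map_mul]
    · rintro ⟨g, f, rfl⟩
      refine ⟨_, ⟨φ.symm g, φ.symm f, rfl⟩, ?_⟩
      simp only [cube3, he, map_mul, MulEquiv.apply_symm_apply]
  · rintro ⟨ψ, hinf, himg⟩
    have hinf' : ψ.symm ∞ = ∞ := by rw [← hinf, ψ.symm_apply_apply]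
    have h1 : ∀ g : G, ∃ h : H, (h : OnePoint H) = ψ g := fun g => by
      apply OnePoint.ne_infty_iff_exists.1
      intro h
      rw [← hinf] at h
      exact OnePoint.coe_ne_infty g (ψ.injective h)
    have h2 : ∀ h : H, ∃ g : G, (g : OnePoint G) = ψ.symm h := fun h => by
      apply OnePoint.ne_infty_iff_exists.1
      intro h'
      rw [← hinf'] at h'
      exact OnePoint.coe_ne_infty h (ψ.symm.injective h')
    choose u hu using h1
    choose v hv using h2
    refine ⟨{ toFun := u, invFun := v, left_inv := ?_, right_inv := ?_, map_mul' := ?_ }, ?_, ?_⟩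
    · intro g
      apply OnePoint.coe_injective
      rw [hv, hu, ψ.symm_apply_apply]
    · intro h
      apply OnePoint.coe_injective
      rw [hu, hv, ψ.apply_symm_apply]
    · intro a b
      rw [← mem_closure_graph_iff, ← himg]
      refine ⟨_, subset_closure ⟨a, b, rfl⟩, ?_⟩
      simp only [cube3, hu]
    · change Continuous u
      rw [OnePoint.isOpenEmbedding_coe.isInducing.continuous_iff]
      have : ((↑) : H → OnePoint H) ∘ u = ψ ∘ ((↑) : G → OnePoint G) := funext hu
      rw [this]
      exact ψ.continuous.comp OnePoint.continuous_coe
    · change Continuous v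
      rw [OnePoint.isOpenEmbedding_coe.isInducing.continuous_iff]
      have : ((↑) : G → OnePoint G) ∘ v = ψ.symm ∘ ((↑) : H → OnePoint H) := funext hv
      rw [this]
      exact ψ.symm.continuous.comp OnePoint.continuous_coe
end

section
/- Let G and H be Polish groups, let X and Y be compact metrizable spaces, and let e_G : G → X and e_H : H → Y be topological embeddings with dense images. Let M_G ⊆ X³ be the closure of {(e_G(g), e_G(f), e_G(gf)) : g, f ∈ G} and M_H ⊆ Y³ the closure of {(e_H(g), e_H(f), e_H(gf)) : g, f ∈ H}. If ψ : X → Y is a homeomorphism with (ψ×ψ×ψ)[M_G] = M_H, then ψ[e_G[G]] = e_H[H], and the induced bijection e_H⁻¹ ∘ ψ ∘ e_G : G → H is an isomorphism of topological groups. -/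
open Filter Topology

theorem rigidity_comap_neBot {A X : Type*} [TopologicalSpace X] {e : A → X} {x : X}
    (h : x ∈ closure (Set.range e)) : NeBot (comap e (𝓝 x)) := by
  rw [comap_neBot_iff]
  intro t ht
  obtain ⟨_, hy, a, rfl⟩ := mem_closure_iff_nhds.1 h t ht
  exact ⟨a, hy⟩

/-- A dense embedded copy of a completely metrizable space in a Hausdorff space is a Gδ set. -/
theorem rigidity_isGdelta_range {G X : Type*} [TopologicalSpace G] [PolishSpace G]
    [TopologicalSpace X] [T2Space X]
    (e : G → X) (he : IsEmbedding e) (hd : Dense (Set.range e)) : IsGδ (Set.range e) := by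
  let := TopologicalSpace.upgradeIsCompletelyMetrizable G
  have key : Set.range e = ⋂ n : ℕ, ⋃₀ {V : Set X | IsOpen V ∧
      ∀ a b : G, e a ∈ V → e b ∈ V → dist a b < 1 / ((n : ℝ) + 1)} := by
    apply Set.Subset.antisymm
    · rintro _ ⟨g, rfl⟩
      refine Set.mem_iInter.2 fun n => ?_
      have hpos : (0 : ℝ) < 1 / ((n : ℝ) + 1) / 2 := by positivity
      obtain ⟨V, hV, hVe⟩ := he.isInducing.isOpen_iff.1
        (Metric.isOpen_ball (x := g) (ε := 1 / ((n : ℝ) + 1) / 2))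
      refine ⟨V, ⟨hV, fun a b ha hb => ?_⟩, ?_⟩
      · have ha' : a ∈ Metric.ball g (1 / ((n : ℝ) + 1) / 2) := by rw [← hVe]; exact ha
        have hb' : b ∈ Metric.ball g (1 / ((n : ℝ) + 1) / 2) := by rw [← hVe]; exact hb
        rw [Metric.mem_ball] at ha' hb'
        have := dist_triangle_right a b g
        linarith
      · have : g ∈ e ⁻¹' V := by rw [hVe]; exact Metric.mem_ball_self hpos
        exact this
    · intro x hx
      rw [Set.mem_iInter] at hx
      have hne : NeBot (comap e (𝓝 x)) := rigidity_comap_neBot (hd x)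
      have hc : Cauchy (comap e (𝓝 x)) := by
        rw [Metric.cauchy_iff]
        refine ⟨hne, fun ε hε => ?_⟩
        obtain ⟨n, hn⟩ := exists_nat_one_div_lt hε
        obtain ⟨V, ⟨hV, hVd⟩, hxV⟩ := hx n
        exact ⟨e ⁻¹' V, preimage_mem_comap (hV.mem_nhds hxV),
          fun a ha b hb => (hVd a b ha hb).trans hn⟩
      obtain ⟨g, hg⟩ := CompleteSpace.complete hc
      refine ⟨g, ?_⟩
      have h1 : Tendsto e (comap e (𝓝 x)) (𝓝 (e g)) := he.continuous.continuousAt.mono_left hg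
      exact tendsto_nhds_unique h1 tendsto_comap
  rw [key]
  refine IsGδ.iInter_of_isOpen fun n => isOpen_sUnion fun V hV => hV.1

/-- A point of the closed graph comes from a filter on pairs. -/
theorem rigidity_filter {G X : Type*} [Group G] [TopologicalSpace X]
    (e : G → X) {x y z : X}
    (h : (x, y, z) ∈ closure {p : X × X × X | ∃ g f : G, p = (e g, e f, e (g * f))}) :
    ∃ F : Filter (G × G), NeBot F ∧ Tendsto (fun p => e p.1) F (𝓝 x) ∧
      Tendsto (fun p => e p.2) F (𝓝 y) ∧ Tendsto (fun p => e (p.1 * p.2)) F (𝓝 z) := by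
  have hs : {p : X × X × X | ∃ g f : G, p = (e g, e f, e (g * f))} =
      Set.range (fun q : G × G => (e q.1, e q.2, e (q.1 * q.2))) := by
    ext p
    constructor
    · rintro ⟨g, f, rfl⟩
      exact ⟨(g, f), rfl⟩
    · rintro ⟨⟨g, f⟩, rfl⟩
      exact ⟨g, f, rfl⟩
  rw [hs] at h
  have ht : Tendsto (fun q : G × G => (e q.1, e q.2, e (q.1 * q.2)))
      (comap (fun q : G × G => (e q.1, e q.2, e (q.1 * q.2))) (𝓝 (x, y, z))) (𝓝 (x, y, z)) :=
    tendsto_comap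
  exact ⟨_, rigidity_comap_neBot h, ht.fst_nhds, ht.snd_nhds.fst_nhds,
    ht.snd_nhds.snd_nhds⟩

theorem rigidity_mul_unique {G X : Type*} [Group G] [TopologicalSpace G] [IsTopologicalGroup G]
    [TopologicalSpace X] [T2Space X] (e : G → X) (he : IsEmbedding e) {g f : G} {z : X}
    (h : (e g, e f, z) ∈ closure {p : X × X × X | ∃ g f : G, p = (e g, e f, e (g * f))}) :
    z = e (g * f) := by
  obtain ⟨F, hF, h1, h2, h3⟩ := rigidity_filter e h
  have h1' : Tendsto (fun p : G × G => p.1) F (𝓝 g) := he.tendsto_nhds_iff.2 h1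
  have h2' : Tendsto (fun p : G × G => p.2) F (𝓝 f) := he.tendsto_nhds_iff.2 h2
  exact tendsto_nhds_unique h3 ((he.continuous.tendsto _).comp (h1'.mul h2'))

theorem rigidity_div_unique {G X : Type*} [Group G] [TopologicalSpace G] [IsTopologicalGroup G]
    [TopologicalSpace X] [T2Space X] (e : G → X) (he : IsEmbedding e) {s t : G} {z : X}
    (h : (z, e s, e t) ∈ closure {p : X × X × X | ∃ g f : G, p = (e g, e f, e (g * f))}) :
    z = e (t * s⁻¹) := by
  obtain ⟨F, hF, h1, h2, h3⟩ := rigidity_filter e h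
  have h2' : Tendsto (fun p : G × G => p.2) F (𝓝 s) := he.tendsto_nhds_iff.2 h2
  have h3' : Tendsto (fun p : G × G => p.1 * p.2) F (𝓝 t) := he.tendsto_nhds_iff.2 h3
  have h4 := (he.continuous.tendsto _).comp (h3'.mul h2'.inv)
  refine tendsto_nhds_unique h1 (h4.congr fun p => ?_)
  simp

/-- The one-sided inclusion when both groups sit in the same compact space. -/
theorem rigidity_range_subset {G H X : Type*}
    [Group G] [TopologicalSpace G] [IsTopologicalGroup G] [PolishSpace G]
    [Group H] [TopologicalSpace H] [IsTopologicalGroup H] [PolishSpace H]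
    [TopologicalSpace X] [CompactSpace X] [T2Space X]
    (eG : G → X) (hG : IsEmbedding eG) (hGd : Dense (Set.range eG))
    (eH : H → X) (hH : IsEmbedding eH) (hHd : Dense (Set.range eH))
    (hM : closure {p : X × X × X | ∃ g f : G, p = (eG g, eG f, eG (g * f))} =
      closure {p : X × X × X | ∃ g f : H, p = (eH g, eH f, eH (g * f))}) :
    Set.range eG ⊆ Set.range eH := by
  have hGδ := rigidity_isGdelta_range eG hG hGd
  have hHδ := rigidity_isGdelta_range eH hH hHd
  have hbaire : BaireSpace G := by
    let := TopologicalSpace.upgradeIsCompletelyMetrizable G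
    infer_instance
  have hSδ : IsGδ (eG ⁻¹' Set.range eH) := hHδ.preimage hG.continuous
  have hSd : Dense (eG ⁻¹' Set.range eH) := by
    rw [hG.isInducing.dense_iff]
    intro x
    rw [Set.image_preimage_eq_inter_range]
    exact Dense.inter_of_Gδ hHδ hGδ hHd hGd _
  rintro _ ⟨g, rfl⟩
  have hTδ : IsGδ ((fun s => g * s) ⁻¹' (eG ⁻¹' Set.range eH)) :=
    hSδ.preimage (continuous_const_mul g)
  have hTd : Dense ((fun s => g * s) ⁻¹' (eG ⁻¹' Set.range eH)) :=
    hSd.preimage (Homeomorph.mulLeft g).isOpenMap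
  obtain ⟨s, ⟨a, ha⟩, ⟨b, hb⟩⟩ := (Dense.inter_of_Gδ hSδ hTδ hSd hTd).nonempty
  have hmem : (eG g, eG s, eG (g * s)) ∈
      closure {p : X × X × X | ∃ g f : G, p = (eG g, eG f, eG (g * f))} :=
    subset_closure ⟨g, s, rfl⟩
  rw [hM, ← ha] at hmem
  change eH b = eG (g * s) at hb
  rw [← hb] at hmem
  exact ⟨_, (rigidity_div_unique eH hH hmem).symm⟩

/-- Rigidity: if Polish groups `G`, `H` are densely embedded in compact metrizable
spaces `X`, `Y` and a homeomorphism `ψ : X → Y` maps the closure of the multiplication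
graph of `G` onto that of `H`, then `ψ` maps the copy of `G` onto the copy of `H`
and induces an isomorphism of topological groups `G → H`. -/
theorem rigidity_of_closure_of_mult_graph
    {G H X Y : Type*} [Group G] [TopologicalSpace G] [IsTopologicalGroup G] [PolishSpace G]
    [Group H] [TopologicalSpace H] [IsTopologicalGroup H] [PolishSpace H]
    [TopologicalSpace X] [CompactSpace X] [TopologicalSpace.MetrizableSpace X]
    [TopologicalSpace Y] [CompactSpace Y] [TopologicalSpace.MetrizableSpace Y]
    (eG : G → X) (hG : Topology.IsEmbedding eG) (hGd : Dense (Set.range eG))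
    (eH : H → Y) (hH : Topology.IsEmbedding eH) (hHd : Dense (Set.range eH))
    (ψ : X ≃ₜ Y)
    (hψ : cube3 ψ '' closure {p : X × X × X | ∃ g f : G, p = (eG g, eG f, eG (g * f))} =
      closure {p : Y × Y × Y | ∃ g f : H, p = (eH g, eH f, eH (g * f))}) :
    ψ '' Set.range eG = Set.range eH ∧
    ∃ π : G ≃* H, Continuous π ∧ Continuous π.symm ∧ ∀ g : G, eH (π g) = ψ (eG g) := by
  have hsymm : Continuous ψ.symm := ψ.symm.continuous
  -- transport the embedding of `H` into `X`
  have hH' : IsEmbedding (ψ.symm ∘ eH) := ψ.symm.isEmbedding.comp hH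
  have hHd' : Dense (Set.range (ψ.symm ∘ eH)) := by
    rw [Set.range_comp]
    exact ψ.symm.surjective.denseRange.dense_image hsymm hHd
  let Ψ : X × X × X ≃ₜ Y × Y × Y := ψ.prodCongr (ψ.prodCongr ψ)
  have hM : closure {p : X × X × X | ∃ g f : G, p = (eG g, eG f, eG (g * f))} =
      closure {p : X × X × X | ∃ g f : H, p = ((ψ.symm ∘ eH) g, (ψ.symm ∘ eH) f,
        (ψ.symm ∘ eH) (g * f))} := by
    have h1 : (cube3 ψ : X × X × X → Y × Y × Y) = Ψ := rfl
    rw [h1] at hψ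
    apply Ψ.injective.image_injective
    rw [hψ, Ψ.image_closure]
    congr 1
    ext p
    constructor
    · rintro ⟨g, f, rfl⟩
      refine ⟨_, ⟨g, f, rfl⟩, ?_⟩
      change (ψ (ψ.symm (eH g)), ψ (ψ.symm (eH f)), ψ (ψ.symm (eH (g * f)))) = _
      simp
    · rintro ⟨_, ⟨g, f, rfl⟩, rfl⟩
      refine ⟨g, f, ?_⟩
      change (ψ (ψ.symm (eH g)), ψ (ψ.symm (eH f)), ψ (ψ.symm (eH (g * f)))) = _
      simp
  have hsub := rigidity_range_subset eG hG hGd (ψ.symm ∘ eH) hH' hHd' hM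
  have hsub' := rigidity_range_subset (ψ.symm ∘ eH) hH' hHd' eG hG hGd hM.symm
  have hex : ∀ g : G, ∃ h : H, eH h = ψ (eG g) := fun g => by
    obtain ⟨h, hh⟩ := hsub ⟨g, rfl⟩
    exact ⟨h, by rw [← hh]; simp⟩
  have hex' : ∀ h : H, ∃ g : G, eH h = ψ (eG g) := fun h => by
    obtain ⟨g, hg⟩ := hsub' ⟨h, rfl⟩
    exact ⟨g, by rw [hg]; simp⟩
  choose p hp using hex
  choose q hq using hex'
  refine ⟨?_, ?_⟩
  · apply Set.Subset.antisymm
    · rintro _ ⟨_, ⟨g, rfl⟩, rfl⟩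
      exact ⟨p g, hp g⟩
    · rintro _ ⟨h, rfl⟩
      exact ⟨eG (q h), ⟨q h, rfl⟩, (hq h).symm⟩
  · have hmul : ∀ a b : G, p (a * b) = p a * p b := fun a b => by
      apply hH.injective
      apply rigidity_mul_unique eH hH
      rw [← hψ, hp, hp, hp]
      exact ⟨(eG a, eG b, eG (a * b)), subset_closure ⟨a, b, rfl⟩, rfl⟩
    let π : G ≃* H :=
      { toFun := p
        invFun := q
        left_inv := fun g => hG.injective (ψ.injective (by rw [← hq, hp]))
        right_inv := fun h => hH.injective (by rw [hp, ← hq])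
        map_mul' := hmul }
    refine ⟨π, ?_, ?_, hp⟩
    · change Continuous p
      rw [hH.continuous_iff]
      have : eH ∘ p = ψ ∘ eG := funext hp
      rw [this]
      exact ψ.continuous.comp hG.continuous
    · change Continuous q
      rw [hG.continuous_iff]
      have : eG ∘ q = ψ.symm ∘ eH := funext fun h => by simp [hq h]
      rw [this]
      exact hsymm.comp hH.continuous
end

section
/- Let 𝔾 be a Polish group, K a compact metrizable space, and e : 𝔾 → K a topological embedding whose image is dense and comeager in K. Let a, b ∈ 𝔾 be such that the subgroup generated by {a, b} is dense in 𝔾, and let R_a ⊆ K² be the closure of {(e(g), e(ga)) : g ∈ 𝔾} and R_b the closure of {(e(g), e(gb)) : g ∈ 𝔾}. Suppose ρ : K → K is a homeomorphism with (ρ×ρ)[R_a] = R_a and (ρ×ρ)[R_b] = R_b. Then there is g₀ ∈ 𝔾 with ρ(e(1)) = e(g₀) and ρ(e(g)) = e(g₀ g) for all g ∈ 𝔾; consequently, for all closed subsets A, B ⊆ 𝔾, if ρ[cl_K(e[A])] = cl_K(e[B]) then g₀A = B. -/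
/-- The coordinatewise action of a map on pairs. -/
def sq2 {A B : Type*} (f : A → B) : A × A → B × B := fun p => (f p.1, f p.2)

theorem aux_graph {G K : Type*} [Group G] [TopologicalSpace G] [IsTopologicalGroup G]
    [T2Space G] [TopologicalSpace K] (e : G → K) (he : Topology.IsEmbedding e) (a g h : G)
    (H : (e g, e h) ∈ closure {p : K × K | ∃ g : G, p = (e g, e (g * a))}) : h = g * a := by
  have h2 := (he.prodMap he).closure_eq_preimage_closure_image {p : G × G | p.2 = p.1 * a}
  have hc : IsClosed {p : G × G | p.2 = p.1 * a} :=
    isClosed_eq continuous_snd (continuous_fst.mul continuous_const)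
  rw [hc.closure_eq] at h2
  have : (g, h) ∈ {p : G × G | p.2 = p.1 * a} := by
    rw [h2]
    refine closure_mono ?_ H
    rintro _ ⟨x, rfl⟩
    exact ⟨(x, x * a), rfl, rfl⟩
  exact this

theorem aux_residual {G K : Type*} [TopologicalSpace G] [TopologicalSpace K] (e : G → K)
    (he : Topology.IsEmbedding e) (hed : Dense (Set.range e)) (s : Set K) (hs : s ∈ residual K) :
    e ⁻¹' s ∈ residual G := by
  rw [mem_residual_iff] at hs ⊢
  obtain ⟨S, ho, hd, hc, hsub⟩ := hs
  refine ⟨(fun t => e ⁻¹' t) '' S, ?_, ?_, hc.image _, ?_⟩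
  · rintro _ ⟨t, ht, rfl⟩
    exact (ho t ht).preimage he.continuous
  · rintro _ ⟨t, ht, rfl⟩
    rw [dense_iff_inter_open]
    intro V hV hne
    obtain ⟨W, hW, rfl⟩ := he.isOpen_iff.1 hV
    obtain ⟨x, hx⟩ := hne
    obtain ⟨y, hy⟩ := (hd t ht).inter_open_nonempty W hW ⟨e x, hx⟩
    obtain ⟨_, hz, z, rfl⟩ := hed.inter_open_nonempty _ (hW.inter (ho t ht)) ⟨y, hy⟩
    exact ⟨z, hz⟩
  · intro x hx
    apply hsub
    intro t ht
    exact hx _ ⟨t, ht, rfl⟩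

/-- Rigidity: let a Polish group `𝔾` be densely and comeagerly embedded in a compact
metrizable space `K`, let `a, b` topologically generate `𝔾`, and let `R_a`, `R_b` be the
closures in `K²` of the graphs of right multiplication by `a`, `b`. Any homeomorphism
`ρ` of `K` preserving `R_a` and `R_b` is the extension of a left translation of `𝔾`;
consequently it relates closures of closed subsets `A, B ⊆ 𝔾` iff `g₀A = B`. -/
theorem rigidity_two_generated
    {𝔾 K : Type*} [Group 𝔾] [TopologicalSpace 𝔾] [IsTopologicalGroup 𝔾] [PolishSpace 𝔾]
    [TopologicalSpace K] [CompactSpace K] [TopologicalSpace.MetrizableSpace K]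
    (e : 𝔾 → K) (he : Topology.IsEmbedding e) (hed : Dense (Set.range e))
    (hec : Set.range e ∈ residual K)
    (a b : 𝔾) (hab : Dense ((Subgroup.closure {a, b} : Subgroup 𝔾) : Set 𝔾))
    (ρ : K ≃ₜ K)
    (hρa : sq2 ρ '' closure {p : K × K | ∃ g : 𝔾, p = (e g, e (g * a))} =
      closure {p : K × K | ∃ g : 𝔾, p = (e g, e (g * a))})
    (hρb : sq2 ρ '' closure {p : K × K | ∃ g : 𝔾, p = (e g, e (g * b))} =
      closure {p : K × K | ∃ g : 𝔾, p = (e g, e (g * b))}) :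
    ∃ g₀ : 𝔾, ρ (e 1) = e g₀ ∧ (∀ g : 𝔾, ρ (e g) = e (g₀ * g)) ∧
      ∀ A B : Set 𝔾, IsClosed A → IsClosed B →
        ρ '' closure (e '' A) = closure (e '' B) → (fun x => g₀ * x) '' A = B := by
  have step : ∀ y ∈ ({a, b} : Set 𝔾), ∀ g k l : 𝔾, ρ (e g) = e k → ρ (e (g * y)) = e l →
      l = k * y := by
    intro y hy g k l hk hl
    apply aux_graph e he y k l
    have key : sq2 ρ (e g, e (g * y)) ∈
        closure {p : K × K | ∃ g : 𝔾, p = (e g, e (g * y))} := by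
      rcases hy with rfl | rfl
      · rw [← hρa]; exact ⟨_, subset_closure ⟨g, rfl⟩, rfl⟩
      · rw [← hρb]; exact ⟨_, subset_closure ⟨g, rfl⟩, rfl⟩
    simpa [sq2, hk, hl] using key
  have hX : e ⁻¹' (ρ ⁻¹' Set.range e) ∈ residual 𝔾 :=
    aux_residual e he hed _ (tendsto_residual_of_isOpenMap ρ.continuous ρ.isOpenMap hec)
  have hcnt : ((Subgroup.closure {a, b} : Subgroup 𝔾) : Set 𝔾).Countable := by
    have hr := FreeGroup.range_lift_eq_closure (f := (Subtype.val : ({a, b} : Set 𝔾) → 𝔾))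
    rw [Subtype.range_coe] at hr
    rw [← hr, MonoidHom.coe_range]
    have hcf : Countable (FreeGroup ({a, b} : Set 𝔾)) :=
      Function.Surjective.countable (f := FreeGroup.mk) Quot.mk_surjective
    exact Set.countable_range _
  have hY : (⋂ w ∈ ((Subgroup.closure {a, b} : Subgroup 𝔾) : Set 𝔾),
      (fun g => g * w) ⁻¹' (e ⁻¹' (ρ ⁻¹' Set.range e))) ∈ residual 𝔾 := by
    rw [countable_bInter_mem hcnt]
    intro w _
    exact tendsto_residual_of_isOpenMap (continuous_mul_const w) (isOpenMap_mul_right w) hX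
  letI := TopologicalSpace.upgradeIsCompletelyMetrizable 𝔾
  obtain ⟨g, hg⟩ := (dense_of_mem_residual hY).nonempty
  simp only [Set.mem_iInter, Set.mem_preimage, Set.mem_range] at hg
  obtain ⟨c, hc⟩ := hg 1 (Subgroup.one_mem _)
  rw [mul_one] at hc
  have hw : ∀ w ∈ Subgroup.closure ({a, b} : Set 𝔾), ρ (e (g * w)) = e (c * w) := by
    intro w hw
    induction hw using Subgroup.closure_induction_right with
    | one => simp [hc]
    | mul_right x hx y hy ih =>
      obtain ⟨k, hk⟩ := hg (x * y) (Subgroup.mul_mem _ hx (Subgroup.subset_closure hy))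
      have := step y hy (g * x) (c * x) k ih (by rw [mul_assoc, hk])
      rw [← hk, this, mul_assoc]
    | mul_inv_cancel x hx y hy ih =>
      obtain ⟨k, hk⟩ := hg (x * y⁻¹)
        (Subgroup.mul_mem _ hx (Subgroup.inv_mem _ (Subgroup.subset_closure hy)))
      have := step y hy (g * (x * y⁻¹)) k (c * x) hk.symm (by rw [← ih]; congr 2; group)
      rw [← hk, ← mul_assoc, this]; simp
  have hall : (fun w => ρ (e (g * w))) = fun w => e (c * w) := by
    refine Continuous.ext_on hab ?_ ?_ hw
    · exact ρ.continuous.comp (he.continuous.comp (continuous_const_mul g))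
    · exact he.continuous.comp (continuous_const_mul c)
  have hmain : ∀ h : 𝔾, ρ (e h) = e (c * g⁻¹ * h) := by
    intro h
    have := congrFun hall (g⁻¹ * h)
    simpa [mul_assoc] using this
  refine ⟨c * g⁻¹, by simpa using hmain 1, hmain, ?_⟩
  intro A B hA hB hAB
  have hA' : IsClosed ((fun x => c * g⁻¹ * x) '' A) := isClosedMap_mul_left (c * g⁻¹) A hA
  rw [← hA'.closure_eq, ← hB.closure_eq, he.closure_eq_preimage_closure_image,
    he.closure_eq_preimage_closure_image, ← hAB, ρ.image_closure, Set.image_image,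
    Set.image_image]
  simp only [hmain]
end

section
/- Let X and Y be nonempty compact metric spaces equipped, for each k ≥ 1, with closed relations R_k ⊆ X^k and S_k ⊆ Y^k. For n ≥ 1 and a tuple ζ = (S'_1,…,S'_n) with S'_k ⊆ {1,…,n}^k, let C_ζ(X) be the set of n×n real matrices [d(x_i,x_j)]_{i,j≤n} over all tuples (x_1,…,x_n) ∈ X^n such that (x_{s(1)},…,x_{s(k)}) ∈ R_k for all k ≤ n and all s ∈ S'_k; define C_ζ(Y) analogously using the relations S_k. Then there exists a surjective isometry φ : X → Y with φ^k[R_k] = S_k for all k ≥ 1 if and only if C_ζ(X) = C_ζ(Y) for every n and every such tuple ζ. -/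
/-- For a compact metric structure `(X, (R_k))`, `n`, and a tuple `ζ` of constraint
sets `S'_k ⊆ {1,…,n}^k` (`1 ≤ k ≤ n`), the set `C_ζ(X)` of distance matrices
`[d(x_i,x_j)]` of tuples `(x_1,…,x_n) ∈ X^n` satisfying the constraints. -/
def distMatrices {X : Type*} [MetricSpace X] (R : ∀ k : ℕ, Set (Fin k → X)) (n : ℕ)
    (S' : ∀ k : ℕ, Set (Fin k → Fin n)) : Set (Fin n → Fin n → ℝ) :=
  {A | ∃ x : Fin n → X, (∀ i j, A i j = dist (x i) (x j)) ∧
    ∀ k, 1 ≤ k → k ≤ n → ∀ s ∈ S' k, (fun i => x (s i)) ∈ R k}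

open Set Filter Topology

theorem isom_surj_aux {X : Type*} [MetricSpace X] [CompactSpace X] (f : X → X)
    (hf : Isometry f) : Function.Surjective f := by
  intro x
  have hcl : IsClosed (range f) := (isCompact_range hf.continuous).isClosed
  have hx : x ∈ closure (range f) := by
    rw [Metric.mem_closure_iff]
    intro ε hε
    obtain ⟨a, φ, hφ, hlim⟩ := CompactSpace.tendsto_subseq (fun n => f^[n] x)
    obtain ⟨N, hN⟩ := Metric.cauchySeq_iff.1 hlim.cauchySeq ε hε
    have h := hN N le_rfl (N+1) (Nat.le_succ _)
    have hlt : φ N < φ (N+1) := hφ (Nat.lt_succ_self N)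
    obtain ⟨d, hd⟩ := Nat.exists_eq_add_of_lt hlt
    have hit : ∀ m, Isometry (f^[m]) := by
      intro m
      induction m with
      | zero => exact isometry_id
      | succ k ih => exact ih.comp hf
    refine ⟨f^[d+1] x, ⟨f^[d] x, ?_⟩, ?_⟩
    · rw [Function.iterate_succ_apply']
    · simp only [Function.comp] at h
      rw [hd, add_assoc, Function.iterate_add_apply, (hit _).dist_eq] at h
      exact h
  rwa [hcl.closure_eq] at hx

theorem dm_mono_aux {X Y : Type*} [MetricSpace X] [MetricSpace Y]
    (R : ∀ k : ℕ, Set (Fin k → X)) (S : ∀ k : ℕ, Set (Fin k → Y)) (f : X → Y)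
    (hf : Isometry f) (h : ∀ k, 1 ≤ k → ∀ r ∈ R k, f ∘ r ∈ S k) (n : ℕ)
    (S' : ∀ k : ℕ, Set (Fin k → Fin n)) : distMatrices R n S' ⊆ distMatrices S n S' := by
  rintro A ⟨x, hA, hx⟩
  refine ⟨f ∘ x, fun i j => ?_, fun k h1 h2 s hs => h k h1 _ (hx k h1 h2 s hs)⟩
  rw [hA]; exact (hf.dist_eq _ _).symm

theorem embed_aux {X Y : Type*} [MetricSpace X] [Nonempty X]
    [MetricSpace Y] [CompactSpace Y] [Nonempty Y]
    (R : ∀ k : ℕ, Set (Fin k → X)) (S : ∀ k : ℕ, Set (Fin k → Y))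
    (hS : ∀ k, 1 ≤ k → IsClosed (S k))
    (H : ∀ n, 1 ≤ n → ∀ S' : ∀ k : ℕ, Set (Fin k → Fin n),
      distMatrices R n S' ⊆ distMatrices S n S') :
    ∃ f : X → Y, Isometry f ∧ ∀ k, 1 ≤ k → ∀ r ∈ R k, f ∘ r ∈ S k := by
  classical
  let A : Finset X × ℕ → Set (X → Y) := fun p =>
    {f | (∀ a ∈ p.1, ∀ b ∈ p.1, dist (f a) (f b) = dist a b) ∧
      ∀ k, 1 ≤ k → k ≤ p.2 → ∀ r ∈ R k, (∀ i, r i ∈ p.1) → f ∘ r ∈ S k}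
  have hanti : Antitone A := by
    rintro p q ⟨h1, h2⟩ f ⟨hf1, hf2⟩
    exact ⟨fun a ha b hb => hf1 a (h1 ha) b (h1 hb),
      fun k hk hk2 r hr hi => hf2 k hk (hk2.trans h2) r hr fun i => h1 (hi i)⟩
  have hclosed : ∀ p, IsClosed (A p) := by
    intro p
    have e : A p = {f : X → Y | ∀ a ∈ p.1, ∀ b ∈ p.1, dist (f a) (f b) = dist a b} ∩
      {f : X → Y | ∀ k, 1 ≤ k → k ≤ p.2 → ∀ r ∈ R k, (∀ i, r i ∈ p.1) → f ∘ r ∈ S k} := rfl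
    rw [e]
    apply IsClosed.inter
    · simp only [Set.ofPred_forall]
      refine isClosed_iInter fun a => isClosed_iInter fun _ => isClosed_iInter fun b =>
        isClosed_iInter fun _ => ?_
      exact isClosed_eq (by fun_prop) continuous_const
    · simp only [Set.ofPred_forall]
      refine isClosed_iInter fun k => isClosed_iInter fun hk => isClosed_iInter fun _ =>
        isClosed_iInter fun r => isClosed_iInter fun _ => isClosed_iInter fun _ => ?_
      exact (hS k hk).preimage (f := fun f : X → Y => f ∘ r)
        (continuous_pi fun i => continuous_apply (r i))
  have hne : ∀ p, (A p).Nonempty := by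
    rintro ⟨F, N⟩
    obtain ⟨x0⟩ := ‹Nonempty X›
    obtain ⟨y0⟩ := ‹Nonempty Y›
    let n := F.toList.length + N + 1
    let x : Fin n → X := fun i => F.toList.getD i x0
    have hx : ∀ a ∈ F, ∃ i, x i = a := by
      intro a ha
      obtain ⟨i, hi, rfl⟩ := List.mem_iff_getElem.1 (Finset.mem_toList.2 ha)
      exact ⟨⟨i, by omega⟩, by simp only [x]; rw [List.getD_eq_getElem _ _ hi]⟩
    obtain ⟨y, hy1, hy2⟩ := H n (by omega) (fun k => {s | (fun i => x (s i)) ∈ R k})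
      (show (fun i j => dist (x i) (x j)) ∈ _ from
        ⟨x, fun _ _ => rfl, fun k _ _ s hs => hs⟩)
    choose! ι hι using hx
    refine ⟨fun a => y (ι a), ?_, ?_⟩
    · intro a ha b hb
      have := hy1 (ι a) (ι b)
      simp only [hι a ha, hι b hb] at this
      exact this.symm
    · intro k hk hkN r hr hi
      refine hy2 k hk (by simp only [n] at *; omega) (fun i => ι (r i)) ?_
      have : (fun i => x (ι (r i))) = r := funext fun i => hι _ (hi i)
      simpa [this] using hr
  obtain ⟨f, hf⟩ := IsCompact.nonempty_iInter_of_directed_nonempty_isCompact_isClosed A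
    hanti.directed_ge hne (fun p => (hclosed p).isCompact) hclosed
  rw [mem_iInter] at hf
  refine ⟨f, Isometry.of_dist_eq fun a b => (hf ({a, b}, 0)).1 a (by simp) b (by simp),
    fun k hk r hr => (hf (Finset.univ.image r, k)).2 k hk le_rfl r hr fun i => by simp⟩

/-- Gromov-type criterion: two nonempty compact metric structures are isometrically
isomorphic iff they have the same constrained distance matrices `C_ζ` for every `n ≥ 1`
and every tuple `ζ` of constraint sets. -/
theorem isometric_iso_iff_distMatrices_eq
    {X Y : Type*} [MetricSpace X] [CompactSpace X] [Nonempty X]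
    [MetricSpace Y] [CompactSpace Y] [Nonempty Y]
    (R : ∀ k : ℕ, Set (Fin k → X)) (S : ∀ k : ℕ, Set (Fin k → Y))
    (hR : ∀ k, 1 ≤ k → IsClosed (R k)) (hS : ∀ k, 1 ≤ k → IsClosed (S k)) :
    (∃ φ : X ≃ᵢ Y, ∀ k, 1 ≤ k → (fun x : Fin k → X => (φ : X → Y) ∘ x) '' R k = S k) ↔
    (∀ n, 1 ≤ n → ∀ S' : ∀ k : ℕ, Set (Fin k → Fin n),
      distMatrices R n S' = distMatrices S n S') := by
  constructor
  · rintro ⟨φ, hφ⟩ n - S'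
    apply Set.Subset.antisymm
    · refine dm_mono_aux R S φ φ.isometry (fun k hk r hr => ?_) n S'
      rw [← hφ k hk]
      exact ⟨r, hr, rfl⟩
    · refine dm_mono_aux S R φ.symm φ.symm.isometry (fun k hk r hr => ?_) n S'
      rw [← hφ k hk] at hr
      obtain ⟨x, hx, rfl⟩ := hr
      have : (φ.symm ∘ (fun x : Fin k → X => (φ : X → Y) ∘ x) x) = x := by
        funext i; simp
      rw [this]; exact hx
  · intro H
    obtain ⟨f, hf, hfR⟩ := embed_aux R S hS fun n hn S' => (H n hn S').subset
    obtain ⟨g, hg, hgS⟩ := embed_aux S R hR fun n hn S' => (H n hn S').superset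
    have hfs : Function.Surjective f := by
      intro y
      obtain ⟨z, hz⟩ := isom_surj_aux (f ∘ g) (hf.comp hg) y
      exact ⟨g z, hz⟩
    refine ⟨IsometryEquiv.mk (Equiv.ofBijective f ⟨hf.injective, hfs⟩) hf, fun k hk => ?_⟩
    apply Set.Subset.antisymm
    · rintro _ ⟨r, hr, rfl⟩
      exact hfR k hk r hr
    · intro y hy
      have : CompactSpace (R k) := isCompact_iff_compactSpace.1 (hR k hk).isCompact
      let h : R k → R k := fun r => ⟨g ∘ f ∘ r.1, hgS k hk _ (hfR k hk _ r.2)⟩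
      have hh : Isometry h := by
        have := Isometry.piMap (fun _ : Fin k => g ∘ f) (fun _ => hg.comp hf)
        intro a b
        exact this a.1 b.1
      obtain ⟨r, hr⟩ := isom_surj_aux h hh ⟨g ∘ y, hgS k hk y hy⟩
      refine ⟨r.1, r.2, funext fun i => hg.injective ?_⟩
      exact congrFun (congrArg Subtype.val hr) i
end

section
/- Let X and Y be compact metric spaces equipped, for each k ≥ 1, with closed relations R_k ⊆ X^k and S_k ⊆ Y^k. Suppose f : X → Y and g : Y → X are isometric embeddings such that f^k[R_k] ⊆ S_k and g^k[S_k] ⊆ R_k for every k ≥ 1. Then f is surjective and f^k[R_k] = S_k for all k ≥ 1; in particular, f is an isometric isomorphism of the structures. -/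
theorem aux_subset_image {Z : Type*} [MetricSpace Z] {K : Set Z} (hK : IsCompact K)
    {h : Z → Z} (hh : Isometry h) (hm : Set.MapsTo h K K) : K ⊆ h '' K := by
  intro y hy
  by_contra hn
  have hc : IsClosed (h '' K) := (hK.image hh.continuous).isClosed
  obtain ⟨ε, hε, hb⟩ := Metric.isOpen_iff.1 hc.isOpen_compl y hn
  have hmem : ∀ n, h^[n] y ∈ K := fun n => hm.iterate n hy
  obtain ⟨a, -, φ, hφ, hlim⟩ := hK.tendsto_subseq hmem
  obtain ⟨N, hN⟩ := Metric.cauchySeq_iff.1 hlim.cauchySeq ε hε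
  have hd := hN (N + 1) (Nat.le_succ N) N le_rfl
  obtain ⟨d, hd'⟩ := Nat.exists_eq_add_of_lt (hφ (Nat.lt_succ_self N))
  have hiter : ∀ n, Isometry (h^[n]) := by
    intro n
    induction n with
    | zero => exact isometry_id
    | succ n ih => exact ih.comp hh
  simp only [Function.comp_apply] at hd
  rw [Nat.succ_eq_add_one, add_assoc] at hd'
  rw [hd', Function.iterate_add_apply, (hiter _).dist_eq] at hd
  refine hb (Metric.mem_ball.2 hd) ?_
  rw [Function.iterate_succ_apply']
  exact ⟨_, hmem d, rfl⟩

/-- If `f : X → Y` and `g : Y → X` are isometric embeddings of compact metric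
structures with `f^k[R_k] ⊆ S_k` and `g^k[S_k] ⊆ R_k` for all `k ≥ 1`, then `f` is
surjective and `f^k[R_k] = S_k` for all `k ≥ 1`, i.e., `f` is an isometric
isomorphism of the structures. -/
theorem isometric_embeddings_give_iso
    {X Y : Type*} [MetricSpace X] [CompactSpace X] [MetricSpace Y] [CompactSpace Y]
    (R : ∀ k : ℕ, Set (Fin k → X)) (S : ∀ k : ℕ, Set (Fin k → Y))
    (hR : ∀ k, 1 ≤ k → IsClosed (R k)) (hS : ∀ k, 1 ≤ k → IsClosed (S k))
    (f : X → Y) (hf : Isometry f) (g : Y → X) (hg : Isometry g)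
    (hfR : ∀ k, 1 ≤ k → (fun x : Fin k → X => f ∘ x) '' R k ⊆ S k)
    (hgS : ∀ k, 1 ≤ k → (fun y : Fin k → Y => g ∘ y) '' S k ⊆ R k) :
    Function.Surjective f ∧ ∀ k, 1 ≤ k → (fun x : Fin k → X => f ∘ x) '' R k = S k := by
  refine ⟨fun y => ?_, fun k hk => (hfR k hk).antisymm fun y hy => ?_⟩
  · obtain ⟨z, -, hz⟩ := aux_subset_image isCompact_univ (hf.comp hg)
      (Set.mapsTo_univ _ _) (Set.mem_univ y)
    exact ⟨g z, hz⟩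
  · have hiso : Isometry (fun y : Fin k → Y => (f ∘ g) ∘ y) := by
      intro a b
      simp only [edist_pi_def, Function.comp_apply, hf.edist_eq, hg.edist_eq]
    obtain ⟨z, hz, hzy⟩ := aux_subset_image (hS k hk).isCompact hiso
      (fun z hz => hfR k hk ⟨_, hgS k hk ⟨z, hz, rfl⟩, rfl⟩) hy
    exact ⟨g ∘ z, hgS k hk ⟨z, hz, rfl⟩, hzy⟩
end

section
/- Let M and N be totally disconnected compact metrizable spaces and, for each k ≥ 1, let R_k ⊆ M^k and S_k ⊆ N^k be closed. Then there exists a homeomorphism f : M → N with f^k[R_k] = S_k for all k ≥ 1 if and only if there exists an isomorphism Φ from the Boolean algebra of clopen subsets of M to the Boolean algebra of clopen subsets of N such that for every k ≥ 1 and all clopen sets a_1,…,a_k ⊆ M: R_k ∩ (a_1 × ⋯ × a_k) = ∅ if and only if S_k ∩ (Φ(a_1) × ⋯ × Φ(a_k)) = ∅. -/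
open TopologicalSpace

theorem aux_sep {X : Type*} [TopologicalSpace X] [CompactSpace X] [T2Space X]
    [TotallyDisconnectedSpace X] {x y : X} (h : ∀ a : Clopens X, x ∈ a → y ∈ a) : x = y := by
  by_contra hne
  obtain ⟨V, hV, hxV, hVU⟩ := compact_exists_isClopen_in_isOpen
    (isOpen_compl_singleton (x := y)) (show x ∈ ({y}ᶜ : Set X) from hne)
  exact hVU (h ⟨V, hV⟩ hxV) rfl

theorem aux_pt {X Y : Type*} [TopologicalSpace X] [TopologicalSpace Y] [CompactSpace Y]
    (Φ : Clopens X ≃o Clopens Y) (x : X) : ∃ y : Y, ∀ a : Clopens X, x ∈ a ↔ y ∈ Φ a := by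
  have hne : (⋂ a : {a : Clopens X // x ∈ a}, (Φ a.1 : Set Y)).Nonempty := by
    haveI : Nonempty {a : Clopens X // x ∈ a} := ⟨⟨⊤, trivial⟩⟩
    apply IsCompact.nonempty_iInter_of_directed_nonempty_isCompact_isClosed
    · intro a b
      refine ⟨⟨a.1 ⊓ b.1, a.2, b.2⟩, ?_, ?_⟩
      · exact Φ.monotone inf_le_left
      · exact Φ.monotone inf_le_right
    · intro a
      by_contra h
      rw [Set.not_nonempty_iff_eq_empty] at h
      have h1 : Φ a.1 = ⊥ := SetLike.coe_injective h
      rw [map_eq_bot_iff] at h1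
      have := a.2
      rw [h1] at this
      exact this
    · intro a
      exact (Φ a.1).isClopen.isClosed.isCompact
    · intro a
      exact (Φ a.1).isClopen.isClosed
  obtain ⟨y, hy⟩ := hne
  rw [Set.mem_iInter] at hy
  refine ⟨y, fun a => ⟨fun h => hy ⟨a, h⟩, fun h => ?_⟩⟩
  by_contra hx
  have h2 : y ∈ Φ aᶜ := hy ⟨aᶜ, hx⟩
  rw [map_compl'] at h2
  exact h2 h

theorem aux_cont {X Y : Type*} [TopologicalSpace X] [TopologicalSpace Y] [CompactSpace Y]
    [T2Space Y] [TotallyDisconnectedSpace Y] (Φ : Clopens X ≃o Clopens Y) (f : X → Y)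
    (hf : ∀ x a, x ∈ a ↔ f x ∈ Φ a) : Continuous f := by
  rw [isTopologicalBasis_isClopen.continuous_iff]
  intro s hs
  have : f ⁻¹' s = (Φ.symm ⟨s, hs⟩ : Set X) := by
    ext x
    have := hf x (Φ.symm ⟨s, hs⟩)
    rw [Φ.apply_symm_apply] at this
    exact this.symm
  rw [this]
  exact (Φ.symm ⟨s, hs⟩).isClopen.isOpen

theorem aux_homeo {X Y : Type*} [TopologicalSpace X] [CompactSpace X] [T2Space X]
    [TotallyDisconnectedSpace X] [TopologicalSpace Y] [CompactSpace Y]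
    [T2Space Y] [TotallyDisconnectedSpace Y] (Φ : Clopens X ≃o Clopens Y) :
    ∃ f : X ≃ₜ Y, ∀ x a, x ∈ a ↔ f x ∈ Φ a := by
  choose f hf using aux_pt Φ
  choose g hg using aux_pt Φ.symm
  refine ⟨⟨⟨f, g, fun x => ?_, fun y => ?_⟩, aux_cont Φ f hf, aux_cont Φ.symm g hg⟩, hf⟩
  · refine (aux_sep fun a ha => ?_).symm
    have := (hg _ _).1 ((hf x a).1 ha)
    rwa [Φ.symm_apply_apply] at this
  · refine (aux_sep fun a ha => ?_).symm
    have := (hf _ _).1 ((hg y a).1 ha)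
    rwa [Φ.apply_symm_apply] at this

theorem aux_box {X : Type*} [TopologicalSpace X] [CompactSpace X] [T2Space X]
    [TotallyDisconnectedSpace X] {k : ℕ} {C : Set (Fin k → X)} (hC : IsClosed C)
    {x : Fin k → X} (hx : x ∉ C) :
    ∃ a : Fin k → Clopens X, (∀ i, x i ∈ a i) ∧ C ∩ {x | ∀ i, x i ∈ a i} = ∅ := by
  obtain ⟨u, hu, hsub⟩ := isOpen_pi_iff'.1 hC.isOpen_compl x hx
  choose V hV hxV hVU using fun i => compact_exists_isClopen_in_isOpen (hu i).1 (hu i).2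
  refine ⟨fun i => ⟨V i, hV i⟩, hxV, ?_⟩
  ext z
  simp only [Set.mem_inter_iff, Set.mem_empty_iff_false, iff_false, not_and]
  exact fun hz h => hsub (fun i _ => hVU i (h i)) hz

/-- For totally disconnected compact metrizable spaces `M`, `N` with closed relations
`R_k ⊆ M^k`, `S_k ⊆ N^k` (`k ≥ 1`), there is a homeomorphism `f : M → N` with
`f^k[R_k] = S_k` for all `k ≥ 1` iff there is a Boolean algebra isomorphism `Φ` between
the clopen algebras such that `R_k` misses `a_1 × ⋯ × a_k` iff `S_k` misses
`Φ(a_1) × ⋯ × Φ(a_k)` for all clopen `a_1, …, a_k`. -/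
theorem homeo_iso_iff_clopen_algebra_iso
    {M N : Type*} [TopologicalSpace M] [CompactSpace M] [MetrizableSpace M]
    [TotallyDisconnectedSpace M]
    [TopologicalSpace N] [CompactSpace N] [MetrizableSpace N]
    [TotallyDisconnectedSpace N]
    (R : ∀ k : ℕ, Set (Fin k → M)) (S : ∀ k : ℕ, Set (Fin k → N))
    (hR : ∀ k, 1 ≤ k → IsClosed (R k)) (hS : ∀ k, 1 ≤ k → IsClosed (S k)) :
    (∃ f : M ≃ₜ N, ∀ k, 1 ≤ k → (fun x : Fin k → M => (f : M → N) ∘ x) '' R k = S k) ↔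
    (∃ Φ : Clopens M ≃o Clopens N, ∀ k, 1 ≤ k → ∀ a : Fin k → Clopens M,
      (R k ∩ {x | ∀ i, x i ∈ a i} = ∅ ↔ S k ∩ {y | ∀ i, y i ∈ Φ (a i)} = ∅)) := by
  constructor
  · rintro ⟨f, hf⟩
    refine ⟨⟨⟨fun a => ⟨f.symm ⁻¹' a, a.isClopen.preimage f.symm.continuous⟩,
      fun b => ⟨f ⁻¹' b, b.isClopen.preimage f.continuous⟩, fun a => ?_, fun b => ?_⟩, ?_⟩, ?_⟩
    · apply SetLike.coe_injective
      ext x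
      simp
    · apply SetLike.coe_injective
      ext x
      simp
    · intro a b
      constructor
      · intro h x hx
        have := @h (f x) (show f.symm (f x) ∈ a by simpa using hx)
        have h2 : f.symm (f x) ∈ b := this
        simpa using h2
      · intro h y hy
        exact h hy
    · intro k hk a
      rw [← hf k hk, ← not_iff_not, ← Ne, ← Ne, ← Set.nonempty_iff_ne_empty,
        ← Set.nonempty_iff_ne_empty]
      constructor
      · rintro ⟨x, hx, hxa⟩
        refine ⟨_, ⟨x, hx, rfl⟩, fun i => ?_⟩
        show f.symm (f (x i)) ∈ a i
        simpa using hxa i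
      · rintro ⟨_, ⟨x, hx, rfl⟩, h⟩
        refine ⟨x, hx, fun i => ?_⟩
        have h2 : f.symm (f (x i)) ∈ a i := h i
        simpa using h2
  · rintro ⟨Φ, hΦ⟩
    obtain ⟨f, hf⟩ := aux_homeo Φ
    refine ⟨f, fun k hk => ?_⟩
    have key : ∀ x : Fin k → M, x ∈ R k ↔ (f : M → N) ∘ x ∈ S k := by
      intro x
      constructor
      · intro hx
        by_contra hn
        obtain ⟨b, hb, hbe⟩ := aux_box (hS k hk) hn
        have h1 := (hΦ k hk (fun i => Φ.symm (b i))).2 (by simpa using hbe)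
        have : x ∈ (∅ : Set (Fin k → M)) := by
          rw [← h1]
          refine ⟨hx, fun i => (hf _ _).2 ?_⟩
          rw [Φ.apply_symm_apply]
          exact hb i
        exact this
      · intro hx
        by_contra hn
        obtain ⟨a, ha, hae⟩ := aux_box (hR k hk) hn
        have h1 := (hΦ k hk a).1 hae
        have : (f : M → N) ∘ x ∈ (∅ : Set (Fin k → N)) := by
          rw [← h1]
          exact ⟨hx, fun i => (hf _ _).1 (ha i)⟩
        exact this
    ext y
    constructor
    · rintro ⟨x, hx, rfl⟩
      exact (key x).1 hx
    · intro hy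
      have e : (f : M → N) ∘ (f.symm ∘ y) = y := by
        ext i
        simp
      exact ⟨f.symm ∘ y, (key _).2 (by rwa [e]), e⟩
end

section
/- Let G and H be Polish groups, let X and Y be Polish spaces, and let e_G : G → X and e_H : H → Y be topological embeddings with dense images. Let 𝒢_G ⊆ X⁴ be the closure of {(e_G(x), e_G(y), e_G(z), e_G(x y⁻¹ z)) : x, y, z ∈ G} and 𝒢_H ⊆ Y⁴ the closure of {(e_H(x), e_H(y), e_H(z), e_H(x y⁻¹ z)) : x, y, z ∈ H}. If φ : X → Y is a homeomorphism with φ⁴[𝒢_G] = 𝒢_H, then φ[e_G[G]] = e_H[H], and the induced bijection ψ = e_H⁻¹ ∘ φ ∘ e_G : G → H is a homeomorphism satisfying ψ(x y⁻¹ z) = ψ(x) ψ(y)⁻¹ ψ(z) for all x, y, z ∈ G, i.e., an isomorphism of the associated topological heaps. -/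
open Topology Filter

/-- The graph of the heap operation, transported by `e`. -/
def hgraph {G X : Type*} [Group G] (e : G → X) : Set (X × X × X × X) :=
  {p | ∃ x y z : G, p = (e x, e y, e z, e (x * y⁻¹ * z))}

theorem isGδ_range_aux {H Y : Type*} [TopologicalSpace H] [PolishSpace H] [TopologicalSpace Y]
    [T2Space Y] (e : H → Y) (he : IsEmbedding e) (hd : Dense (Set.range e)) :
    IsGδ (Set.range e) := by
  letI := TopologicalSpace.upgradeIsCompletelyMetrizable H
  let F : ℕ → Set (Set Y) := fun n =>
    {V | IsOpen V ∧ ∀ a b, e a ∈ V → e b ∈ V → dist a b < 1 / ((n : ℝ) + 1)}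
  have hEq : Set.range e = ⋂ n, ⋃₀ F n := by
    apply Set.Subset.antisymm
    · rintro _ ⟨h, rfl⟩
      refine Set.mem_iInter.2 fun n => ?_
      have hpos : (0 : ℝ) < 1 / ((n : ℝ) + 1) := by positivity
      obtain ⟨V, hV, hVe⟩ := he.isOpen_iff.1
        (Metric.isOpen_ball (x := h) (ε := 1 / ((n : ℝ) + 1) / 2))
      refine ⟨V, ⟨hV, fun a b ha hb => ?_⟩, ?_⟩
      · have ha' : a ∈ e ⁻¹' V := ha
        have hb' : b ∈ e ⁻¹' V := hb
        rw [hVe, Metric.mem_ball] at ha' hb'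
        have := dist_triangle_right a b h
        linarith
      · have : h ∈ e ⁻¹' V := by
          rw [hVe]; exact Metric.mem_ball_self (by positivity)
        exact this
    · intro y hy
      have hne : NeBot (comap e (𝓝 y)) := by
        rw [comap_neBot_iff_frequently]
        exact mem_closure_iff_frequently.1 (hd y)
      have hc : Cauchy (comap e (𝓝 y)) := by
        rw [Metric.cauchy_iff]
        refine ⟨hne, fun ε hε => ?_⟩
        obtain ⟨n, hn⟩ := exists_nat_one_div_lt hε
        obtain ⟨V, ⟨hV, hVd⟩, hyV⟩ := Set.mem_iInter.1 hy n
        exact ⟨e ⁻¹' V, preimage_mem_comap (hV.mem_nhds hyV),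
          fun a ha b hb => (hVd a b ha hb).trans hn⟩
      obtain ⟨h, hh⟩ := CompleteSpace.complete hc
      refine ⟨h, ?_⟩
      exact tendsto_nhds_unique ((he.continuous.tendsto h).mono_left hh) tendsto_comap
  rw [hEq]
  exact IsGδ.iInter_of_isOpen fun n => isOpen_sUnion fun V hV => hV.1

section
variable {H Y : Type*} [Group H] [TopologicalSpace H] [IsTopologicalGroup H]
  [TopologicalSpace Y] [T2Space Y] [FirstCountableTopology Y]

theorem hgraph_fourth (e : H → Y) (he : IsEmbedding e) {x y z : H} {w : Y}
    (h : (e x, e y, e z, w) ∈ closure (hgraph e)) : w = e (x * y⁻¹ * z) := by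
  obtain ⟨p, hp, hlim⟩ := mem_closure_iff_seq_limit.1 h
  choose a b c habc using hp
  have hpf : p = fun n => (e (a n), e (b n), e (c n), e (a n * (b n)⁻¹ * c n)) := funext habc
  rw [hpf] at hlim
  rw [Prod.tendsto_iff, Prod.tendsto_iff, Prod.tendsto_iff] at hlim
  obtain ⟨h1, h2, h3, h4⟩ := hlim
  have h1' : Tendsto a atTop (𝓝 x) := he.tendsto_nhds_iff.2 h1
  have h2' : Tendsto b atTop (𝓝 y) := he.tendsto_nhds_iff.2 h2
  have h3' : Tendsto c atTop (𝓝 z) := he.tendsto_nhds_iff.2 h3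
  exact tendsto_nhds_unique h4 ((he.continuous.tendsto _).comp ((h1'.mul h2'.inv).mul h3'))

theorem hgraph_first (e : H → Y) (he : IsEmbedding e) {y z t : H} {w : Y}
    (h : (w, e y, e z, e t) ∈ closure (hgraph e)) : w ∈ Set.range e := by
  obtain ⟨p, hp, hlim⟩ := mem_closure_iff_seq_limit.1 h
  choose a b c habc using hp
  have hpf : p = fun n => (e (a n), e (b n), e (c n), e (a n * (b n)⁻¹ * c n)) := funext habc
  rw [hpf] at hlim
  rw [Prod.tendsto_iff, Prod.tendsto_iff, Prod.tendsto_iff] at hlim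
  obtain ⟨h1, h2, h3, h4⟩ := hlim
  have h2' : Tendsto b atTop (𝓝 y) := he.tendsto_nhds_iff.2 h2
  have h3' : Tendsto c atTop (𝓝 z) := he.tendsto_nhds_iff.2 h3
  have h4' : Tendsto (fun n => a n * (b n)⁻¹ * c n) atTop (𝓝 t) := he.tendsto_nhds_iff.2 h4
  have h5 : Tendsto a atTop (𝓝 (t * z⁻¹ * y)) := by
    have := (h4'.mul h3'.inv).mul h2'
    simpa using this
  exact ⟨_, tendsto_nhds_unique ((he.continuous.tendsto _).comp h5) h1⟩
end

theorem range_subset_aux {G H Y : Type*} [Group G] [TopologicalSpace G] [IsTopologicalGroup G]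
    [PolishSpace G] [Group H] [TopologicalSpace H] [IsTopologicalGroup H] [PolishSpace H]
    [TopologicalSpace Y] [PolishSpace Y]
    (e : G → Y) (he : IsEmbedding e) (hed : Dense (Set.range e))
    (f : H → Y) (hf : IsEmbedding f) (hfd : Dense (Set.range f))
    (h : hgraph e ⊆ closure (hgraph f)) : Set.range e ⊆ Set.range f := by
  have hfG := isGδ_range_aux f hf hfd
  have hd : Dense (Set.range e ∩ Set.range f) :=
    hed.inter_of_Gδ (isGδ_range_aux e he hed) hfG hfd
  set S : Set G := e ⁻¹' Set.range f with hS
  have hSG : IsGδ S := hfG.preimage he.continuous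
  have hSd : Dense S := by
    intro g
    rw [he.closure_eq_preimage_closure_image, hS, Set.image_preimage_eq_range_inter]
    exact hd _
  rintro _ ⟨x, rfl⟩
  obtain ⟨z, hz⟩ := hSd.nonempty
  let T : G ≃ₜ G := (Homeomorph.inv G).trans ((Homeomorph.mulLeft x).trans (Homeomorph.mulRight z))
  have hT : ∀ y, T y = x * y⁻¹ * z := fun y => rfl
  have hTd : Dense (T ⁻¹' S) := hSd.preimage T.isOpenMap
  obtain ⟨y, hy, hy'⟩ := (hSd.inter_of_Gδ hSG (hSG.preimage T.continuous) hTd).nonempty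
  obtain ⟨a, ha⟩ := hz
  obtain ⟨b, hb⟩ := hy
  obtain ⟨c, hc⟩ := hy'
  rw [hT] at hc
  have := h ⟨x, y, z, rfl⟩
  rw [← ha, ← hb, ← hc] at this
  exact hgraph_first f hf this


/-- The coordinatewise action of a map on quadruples. -/
def quad4 {A B : Type*} (f : A → B) : A × A × A × A → B × B × B × B :=
  fun p => (f p.1, f p.2.1, f p.2.2.1, f p.2.2.2)

/-- Rigidity for heaps: if Polish groups `G`, `H` are densely embedded in Polish spaces
`X`, `Y` and a homeomorphism `φ : X → Y` maps the closure of the graph of the heap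
operation `(x,y,z) ↦ x y⁻¹ z` of `G` onto that of `H`, then `φ` maps the copy of `G`
onto the copy of `H` and induces an isomorphism of the associated topological heaps. -/
theorem heap_rigidity
    {G H X Y : Type*} [Group G] [TopologicalSpace G] [IsTopologicalGroup G] [PolishSpace G]
    [Group H] [TopologicalSpace H] [IsTopologicalGroup H] [PolishSpace H]
    [TopologicalSpace X] [PolishSpace X] [TopologicalSpace Y] [PolishSpace Y]
    (eG : G → X) (hG : Topology.IsEmbedding eG) (hGd : Dense (Set.range eG))
    (eH : H → Y) (hH : Topology.IsEmbedding eH) (hHd : Dense (Set.range eH))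
    (φ : X ≃ₜ Y)
    (hφ : quad4 φ '' closure {p : X × X × X × X |
        ∃ x y z : G, p = (eG x, eG y, eG z, eG (x * y⁻¹ * z))} =
      closure {p : Y × Y × Y × Y | ∃ x y z : H, p = (eH x, eH y, eH z, eH (x * y⁻¹ * z))}) :
    φ '' Set.range eG = Set.range eH ∧
    ∃ ψ : G ≃ₜ H, (∀ g : G, eH (ψ g) = φ (eG g)) ∧
      ∀ x y z : G, ψ (x * y⁻¹ * z) = ψ x * (ψ y)⁻¹ * ψ z := by
  have he : IsEmbedding (φ ∘ eG) := φ.isEmbedding.comp hG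
  have hed : Dense (Set.range (φ ∘ eG)) := by
    rw [Set.range_comp]
    exact φ.surjective.denseRange.dense_image φ.continuous hGd
  have hq : Continuous (quad4 φ) := by
    have := φ.continuous
    unfold quad4
    fun_prop
  change quad4 φ '' closure (hgraph eG) = closure (hgraph eH) at hφ
  have h1 : hgraph (φ ∘ eG) ⊆ closure (hgraph eH) := by
    rintro _ ⟨x, y, z, rfl⟩
    rw [← hφ]
    exact ⟨_, subset_closure ⟨x, y, z, rfl⟩, rfl⟩
  have h2 : hgraph eH ⊆ closure (hgraph (φ ∘ eG)) := by
    refine subset_closure.trans ?_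
    rw [← hφ]
    refine (image_closure_subset_closure_image hq).trans (closure_mono ?_)
    rintro _ ⟨_, ⟨x, y, z, rfl⟩, rfl⟩
    exact ⟨x, y, z, rfl⟩
  have hr : Set.range (φ ∘ eG) = Set.range eH :=
    Set.Subset.antisymm (range_subset_aux _ he hed _ hH hHd h1)
      (range_subset_aux _ hH hHd _ he hed h2)
  refine ⟨by rw [← Set.range_comp, hr], ?_⟩
  let ψ : G ≃ₜ H := he.toHomeomorph.trans
    ((Homeomorph.setCongr hr).trans hH.toHomeomorph.symm)
  have hψ : ∀ g : G, eH (ψ g) = φ (eG g) := fun g =>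
    congrArg Subtype.val (hH.toHomeomorph.apply_symm_apply
      (Homeomorph.setCongr hr (he.toHomeomorph g)))
  refine ⟨ψ, hψ, fun x y z => ?_⟩
  have h3 := h1 ⟨x, y, z, rfl⟩
  simp only [Function.comp_apply, ← hψ] at h3
  exact hH.injective (hgraph_fourth eH hH h3)
end

section
/- Let (M, d_M) and (N, d_N) be nonempty complete separable metric spaces and, for each k ∈ ℕ, let a_k ∈ ℕ and let R_k ⊆ M^{a_k} and S_k ⊆ N^{a_k} be closed. Then there exists a bijection φ : M → N with φ and φ⁻¹ uniformly continuous and φ^{a_k}[R_k] = S_k for all k, if and only if there exist sequences (x_n)_{n∈ℕ} in M and (y_n)_{n∈ℕ} in N such that: {x_n : n ∈ ℕ} is dense in M and {y_n : n ∈ ℕ} is dense in N; for each k, R_k is the closure of R_k ∩ {x_n : n ∈ ℕ}^{a_k} and S_k is the closure of S_k ∩ {y_n : n ∈ ℕ}^{a_k}; for every ε > 0 there is δ > 0 such that for all i, j, d_M(x_i,x_j) < δ implies d_N(y_i,y_j) < ε; for every ε > 0 there is δ > 0 such that for all i, j, d_N(y_i,y_j) < δ implies d_M(x_i,x_j) <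 ε; and for every k and all indices i_1,…,i_{a_k} ∈ ℕ, (x_{i_1},…,x_{i_{a_k}}) ∈ R_k if and only if (y_{i_1},…,y_{i_{a_k}}) ∈ S_k. -/
theorem aux_extend {M N : Type*} [MetricSpace M] [MetricSpace N] [CompleteSpace N]
    (x : ℕ → M) (y : ℕ → N) (hx : Dense (Set.range x))
    (h : ∀ ε : ℝ, 0 < ε → ∃ δ : ℝ, 0 < δ ∧
        ∀ i j : ℕ, dist (x i) (x j) < δ → dist (y i) (y j) < ε) :
    ∃ f : M → N, UniformContinuous f ∧ ∀ i, f (x i) = y i := by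
  have hg : ∃ g : Set.range x → N, ∀ p i, x i = p.1 → g p = y i := by
    refine ⟨fun p => y p.2.choose, fun p i hi => ?_⟩
    refine eq_of_forall_dist_le fun ε hε => ?_
    obtain ⟨δ, hδ, hd⟩ := h ε hε
    refine (hd _ _ ?_).le
    rw [p.2.choose_spec, hi, dist_self]
    exact hδ
  obtain ⟨g, hg⟩ := hg
  have hgu : UniformContinuous g := by
    rw [Metric.uniformContinuous_iff]
    intro ε hε
    obtain ⟨δ, hδ, hd⟩ := h ε hε
    refine ⟨δ, hδ, ?_⟩
    rintro ⟨_, i, rfl⟩ ⟨_, j, rfl⟩ hij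
    rw [hg _ i rfl, hg _ j rfl]
    exact hd i j hij
  have hd : DenseRange (Subtype.val : Set.range x → M) := hx.denseRange_val
  have hu : IsUniformInducing (Subtype.val : Set.range x → M) := isUniformInducing_val _
  refine ⟨_, uniformContinuous_uniformly_extend hu hd hgu, fun i => ?_⟩
  have := uniformly_extend_of_ind hu hd hgu ⟨x i, i, rfl⟩
  rw [hg _ i rfl] at this
  exact this

theorem aux_maps {M N : Type*} [MetricSpace M] [MetricSpace N] {m : ℕ}
    (x : ℕ → M) (y : ℕ → N) (R : Set (Fin m → M)) (S : Set (Fin m → N)) (hS : IsClosed S)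
    (hR : R = closure (R ∩ {u | ∀ i, u i ∈ Set.range x}))
    (f : M → N) (hf : Continuous f) (hfx : ∀ i, f (x i) = y i)
    (h : ∀ idx : Fin m → ℕ, ((fun i => x (idx i)) ∈ R → (fun i => y (idx i)) ∈ S))
    (u : Fin m → M) (hu : u ∈ R) : f ∘ u ∈ S := by
  have hc : Continuous (fun u : Fin m → M => f ∘ u) := by
    refine continuous_pi fun i => ?_
    exact hf.comp (continuous_apply i)
  have : closure (R ∩ {u | ∀ i, u i ∈ Set.range x}) ⊆ (fun u : Fin m → M => f ∘ u) ⁻¹' S := by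
    refine closure_minimal ?_ (hS.preimage hc)
    rintro v ⟨hv, hvx⟩
    choose idx hidx using hvx
    have e : v = fun i => x (idx i) := funext fun i => (hidx i).symm
    subst e
    have := h idx hv
    have e2 : (f ∘ fun i => x (idx i)) = fun i => y (idx i) := funext fun i => hfx _
    show f ∘ _ ∈ S
    rwa [e2]
  rw [hR] at hu
  exact this hu

/-- Two Polish metric structures `(M, (R_k))`, `(N, (S_k))` with closed relations of
arities `a_k` are uniformly homeomorphically isomorphic iff there are dense sequences
`(x_n)` in `M` and `(y_n)` in `N` such that the relations are determined by their
restrictions to the sequences, the correspondence `x_n ↦ y_n` is uniformly continuous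
in both directions, and it preserves the relations in both directions. -/
theorem unif_homeo_iso_iff_sequences
    {M N : Type*} [MetricSpace M] [CompleteSpace M] [TopologicalSpace.SeparableSpace M] [Nonempty M]
    [MetricSpace N] [CompleteSpace N] [TopologicalSpace.SeparableSpace N] [Nonempty N]
    (a : ℕ → ℕ) (R : ∀ k : ℕ, Set (Fin (a k) → M)) (S : ∀ k : ℕ, Set (Fin (a k) → N))
    (hR : ∀ k, IsClosed (R k)) (hS : ∀ k, IsClosed (S k)) :
    (∃ φ : M ≃ N, UniformContinuous (φ : M → N) ∧ UniformContinuous (φ.symm : N → M) ∧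
      ∀ k, (fun x : Fin (a k) → M => (φ : M → N) ∘ x) '' R k = S k) ↔
    (∃ (x : ℕ → M) (y : ℕ → N),
      Dense (Set.range x) ∧ Dense (Set.range y) ∧
      (∀ k, R k = closure (R k ∩ {u | ∀ i, u i ∈ Set.range x})) ∧
      (∀ k, S k = closure (S k ∩ {v | ∀ i, v i ∈ Set.range y})) ∧
      (∀ ε : ℝ, 0 < ε → ∃ δ : ℝ, 0 < δ ∧
        ∀ i j : ℕ, dist (x i) (x j) < δ → dist (y i) (y j) < ε) ∧
      (∀ ε : ℝ, 0 < ε → ∃ δ : ℝ, 0 < δ ∧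
        ∀ i j : ℕ, dist (y i) (y j) < δ → dist (x i) (x j) < ε) ∧
      (∀ k, ∀ idx : Fin (a k) → ℕ,
        ((fun i => x (idx i)) ∈ R k ↔ (fun i => y (idx i)) ∈ S k))) := by
  constructor
  · rintro ⟨φ, hφ, hψ, hRS⟩
    have hC : ∀ k, ∃ C : Set (Fin (a k) → M), C ⊆ R k ∧ C.Countable ∧ R k ⊆ closure C := fun k =>
      (TopologicalSpace.IsSeparable.of_separableSpace (R k)).exists_countable_dense_subset
    choose C hCR hCc hCd using hC
    obtain ⟨D, hDc, hDd⟩ := TopologicalSpace.exists_countable_dense M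
    have hcount : (D ∪ ⋃ k, ⋃ u ∈ C k, Set.range u).Countable :=
      hDc.union (Set.countable_iUnion fun k => (hCc k).biUnion fun u _ => Set.countable_range u)
    obtain ⟨x, hx⟩ := hcount.exists_eq_range (hDd.nonempty.mono Set.subset_union_left)
    have hxd : Dense (Set.range x) := hx ▸ hDd.mono Set.subset_union_left
    have hRx : ∀ k, R k = closure (R k ∩ {u | ∀ i, u i ∈ Set.range x}) := by
      intro k
      refine Set.Subset.antisymm ((hCd k).trans (closure_mono fun u hu => ⟨hCR k hu, fun i => ?_⟩))
        (closure_minimal Set.inter_subset_left (hR k))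
      rw [← hx]
      exact Or.inr (Set.mem_iUnion.2 ⟨k, Set.mem_iUnion₂.2 ⟨u, hu, i, rfl⟩⟩)
    have hiff : ∀ k (u : Fin (a k) → M), u ∈ R k ↔ (φ : M → N) ∘ u ∈ S k := by
      intro k u
      rw [← hRS k]
      exact (Function.Injective.mem_set_image (φ.injective.comp_left)).symm
    refine ⟨x, φ ∘ x, hxd, ?_, hRx, ?_, ?_, ?_, fun k idx => hiff k _⟩
    · exact φ.surjective.denseRange.comp hxd hφ.continuous
    · intro k
      refine Set.Subset.antisymm ?_ (closure_minimal Set.inter_subset_left (hS k))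
      intro v hv
      rw [← hRS k] at hv
      obtain ⟨u, hu, rfl⟩ := hv
      have hc : Continuous (fun u : Fin (a k) → M => (φ : M → N) ∘ u) :=
        continuous_pi fun i => hφ.continuous.comp (continuous_apply i)
      rw [hRx k] at hu
      refine closure_mono ?_ (image_closure_subset_closure_image hc ⟨u, hu, rfl⟩)
      rintro _ ⟨w, ⟨hw, hwx⟩, rfl⟩
      refine ⟨(hiff k w).1 hw, fun i => ?_⟩
      obtain ⟨j, hj⟩ := hwx i
      exact ⟨j, congrArg φ hj⟩
    · intro ε hε
      obtain ⟨δ, hδ, h⟩ := Metric.uniformContinuous_iff.1 hφ ε hε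
      exact ⟨δ, hδ, fun i j hij => h hij⟩
    · intro ε hε
      obtain ⟨δ, hδ, h⟩ := Metric.uniformContinuous_iff.1 hψ ε hε
      refine ⟨δ, hδ, fun i j hij => ?_⟩
      simpa using h hij
  · rintro ⟨x, y, hx, hy, hRx, hSy, hxy, hyx, hrel⟩
    obtain ⟨f, hf, hfx⟩ := aux_extend x y hx hxy
    obtain ⟨g, hg, hgy⟩ := aux_extend y x hy hyx
    have hgf : ∀ p, g (f p) = p := by
      refine congrFun (Continuous.ext_on hx (hg.continuous.comp hf.continuous) continuous_id ?_)
      rintro _ ⟨i, rfl⟩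
      simp [hfx, hgy]
    have hfg : ∀ p, f (g p) = p := by
      refine congrFun (Continuous.ext_on hy (hf.continuous.comp hg.continuous) continuous_id ?_)
      rintro _ ⟨i, rfl⟩
      simp [hfx, hgy]
    refine ⟨⟨f, g, hgf, hfg⟩, hf, hg, fun k => Set.Subset.antisymm ?_ ?_⟩
    · rintro _ ⟨u, hu, rfl⟩
      exact aux_maps x y (R k) (S k) (hS k) (hRx k) f hf.continuous hfx
        (fun idx => (hrel k idx).1) u hu
    · intro v hv
      exact ⟨g ∘ v, aux_maps y x (S k) (R k) (hR k) (hSy k) g hg.continuous hgy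
        (fun idx => (hrel k idx).2) v hv, funext fun i => hfg _⟩
end

section
/- Let G be an uncountable, non-compact, locally compact Polish group admitting a neighborhood basis at the identity consisting of open subgroups. Then the one-point (Alexandrov) compactification of G is homeomorphic to the Cantor space 2^ℕ. -/
theorem cantor_of_separating {X : Type*} [TopologicalSpace X] [CompactSpace X]
    [Nonempty X] (hp : ∀ x : X, (nhdsWithin x {x}ᶜ).NeBot)
    (C : ℕ → Set X) (hC : ∀ n, IsClopen (C n))
    (hsep : ∀ x y : X, (∀ n, x ∈ C n ↔ y ∈ C n) → x = y) :
    Nonempty (X ≃ₜ (ℕ → Bool)) := by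
  classical
  -- splitting
  have hsplit : ∀ (n : ℕ) (S : Set X), ∃ D : Set X, IsClopen D ∧
      (IsClopen S → S.Nonempty → (S ∩ D).Nonempty ∧ (S \ D).Nonempty ∧
        ((S ∩ C n).Nonempty → (S \ C n).Nonempty → D = C n)) := by
    intro n S
    by_cases h : (S ∩ C n).Nonempty ∧ (S \ C n).Nonempty
    · exact ⟨C n, hC n, fun _ _ => ⟨h.1, h.2, fun _ _ => rfl⟩⟩
    by_cases hS : IsClopen S ∧ S.Nonempty
    · obtain ⟨hS, x, hx⟩ := hS
      have : ∃ y ∈ S, y ≠ x := by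
        have h1 : S ∈ nhdsWithin x {x}ᶜ := mem_nhdsWithin_of_mem_nhds (hS.isOpen.mem_nhds hx)
        have h2 := self_mem_nhdsWithin (a := x) (s := {x}ᶜ)
        obtain ⟨y, hy⟩ := (hp x).nonempty_of_mem (Filter.inter_mem h1 h2)
        exact ⟨y, hy.1, hy.2⟩
      obtain ⟨y, hy, hyx⟩ := this
      have : ∃ m, ¬ (y ∈ C m ↔ x ∈ C m) := by
        by_contra hcon
        push Not at hcon
        exact hyx (hsep y x hcon)
      obtain ⟨m, hm⟩ := this
      refine ⟨C m, hC m, fun _ _ => ⟨?_, ?_, fun h1 h2 => absurd ⟨h1, h2⟩ h⟩⟩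
      · by_cases hxm : x ∈ C m
        · exact ⟨x, hx, hxm⟩
        · exact ⟨y, hy, by tauto⟩
      · by_cases hxm : x ∈ C m
        · exact ⟨y, hy, by tauto⟩
        · exact ⟨x, hx, hxm⟩
    · exact ⟨C n, hC n, fun h1 h2 => absurd ⟨h1, h2⟩ hS⟩
  choose D hDc hD using hsplit
  let cx : X → ℕ → Set X := fun x n => Nat.rec Set.univ
    (fun n S => if x ∈ D n S then S ∩ D n S else S \ D n S) n
  have cx0 : ∀ x, cx x 0 = Set.univ := fun _ => rfl
  have cxs : ∀ x n, cx x (n+1) =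
      if x ∈ D n (cx x n) then cx x n ∩ D n (cx x n) else cx x n \ D n (cx x n) :=
    fun _ _ => rfl
  clear_value cx
  have hself : ∀ x n, x ∈ cx x n := by
    intro x n
    induction n with
    | zero => simp [cx0]
    | succ n ih =>
      rw [cxs]
      split_ifs with h
      · exact ⟨ih, h⟩
      · exact ⟨ih, h⟩
  have hclopen : ∀ x n, IsClopen (cx x n) := by
    intro x n
    induction n with
    | zero => rw [cx0]; exact isClopen_univ
    | succ n ih =>
      rw [cxs]
      split_ifs with h
      · exact ih.inter (hDc _ _)
      · exact ih.diff (hDc _ _)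
  have hanti : ∀ x n, cx x (n+1) ⊆ cx x n := by
    intro x n
    rw [cxs]
    split_ifs
    · exact Set.inter_subset_left
    · exact Set.sdiff_subset
  have hmemD : ∀ x y n, y ∈ cx x (n+1) → (y ∈ D n (cx x n) ↔ x ∈ D n (cx x n)) := by
    intro x y n h
    rw [cxs] at h
    split_ifs at h with hx
    · exact ⟨fun _ => hx, fun _ => h.2⟩
    · exact ⟨fun h' => absurd h' h.2, fun h' => absurd h' hx⟩
  have heq : ∀ x y n, y ∈ cx x n → cx y n = cx x n := by
    intro x y n
    induction n with
    | zero => intro _; rw [cx0, cx0]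
    | succ n ih =>
      intro h
      have h1 := ih (hanti x n h)
      have h2 := hmemD x y n h
      rw [cxs y, h1, cxs x]
      simp only [h2]
  let f : X → ℕ → Bool := fun x n => decide (x ∈ D n (cx x n))
  have hf1 : ∀ x y n, y ∈ cx x (n+1) → f y n = f x n := by
    intro x y n h
    simp only [f]
    rw [heq x y n (hanti x n h)]
    simp only [hmemD x y n h]
  have hmono : ∀ x, Antitone (cx x) := fun x => antitone_nat_of_succ_le (hanti x)
  have hcont : Continuous f := by
    refine continuous_pi fun n => ?_
    apply IsLocallyConstant.continuous
    rw [IsLocallyConstant.iff_eventually_eq]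
    intro x
    filter_upwards [(hclopen x (n+1)).isOpen.mem_nhds (hself x (n+1))] with y hy
    exact hf1 x y n hy
  have hcxeq : ∀ x y, f x = f y → ∀ n, cx x n = cx y n := by
    intro x y h n
    induction n with
    | zero => rw [cx0, cx0]
    | succ n ih =>
      have := congrFun h n
      simp only [f, decide_eq_decide] at this
      rw [cxs, cxs]
      rw [ih] at this ⊢
      simp only [this]
  have hinj : Function.Injective f := by
    intro x y h
    have h1 := hcxeq x y h
    have hxy : ∀ n, y ∈ cx x n := fun n => by rw [h1]; exact hself y n
    apply hsep
    intro n
    have h2 := (hD n (cx x n) (hclopen x n) ⟨x, hself x n⟩).2.2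
    have h3 := hmemD x y n (hxy (n+1))
    by_contra hcon
    have hDC : D n (cx x n) = C n := by
      by_cases hx : x ∈ C n
      · exact h2 ⟨x, hself x n, hx⟩ ⟨y, hxy n, by tauto⟩
      · exact h2 ⟨y, hxy n, by tauto⟩ ⟨x, hself x n, hx⟩
    rw [hDC] at h3
    exact hcon h3.symm
  have hfin : ∀ (b : ℕ → Bool) n, ∃ x, ∀ i < n, f x i = b i := by
    intro b n
    induction n with
    | zero => exact ⟨Classical.arbitrary X, by simp⟩
    | succ n ih =>
      obtain ⟨x, hx⟩ := ih
      obtain ⟨⟨y, hy⟩, ⟨z, hz⟩, -⟩ := hD n (cx x n) (hclopen x n) ⟨x, hself x n⟩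
      have key : ∀ w, w ∈ cx x n → f w n = b n → ∃ x, ∀ i < n + 1, f x i = b i := by
        intro w hw hwn
        refine ⟨w, fun i hi => ?_⟩
        rcases Nat.lt_succ_iff_lt_or_eq.1 hi with h | h
        · rw [← hx i h]
          exact hf1 x w i (hmono x h hw)
        · rw [h, hwn]
      cases hb : b n with
      | true =>
        refine key y hy.1 ?_
        simp only [f, hb, decide_eq_true_eq, heq x y n hy.1]
        exact hy.2
      | false =>
        refine key z hz.1 ?_
        simp only [f, hb, decide_eq_false_iff_not, heq x z n hz.1]
        exact hz.2
  have hsurj : Function.Surjective f := by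
    intro b
    have hcl : ∀ n, IsClosed {x | ∀ i < n, f x i = b i} := by
      intro n
      simp only [Set.ofPred_forall]
      refine isClosed_iInter fun i => isClosed_iInter fun _ => ?_
      exact isClosed_eq ((continuous_apply i).comp hcont) continuous_const
    have := IsCompact.nonempty_iInter_of_sequence_nonempty_isCompact_isClosed
      (fun n => {x | ∀ i < n, f x i = b i})
      (fun n x hx i hi => hx i (Nat.lt_succ_of_lt hi)) (fun n => hfin b n)
      (hcl 0).isCompact hcl
    obtain ⟨x, hx⟩ := this
    refine ⟨x, funext fun i => ?_⟩
    exact Set.mem_iInter.1 hx (i+1) i (Nat.lt_succ_self i)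
  exact ⟨Continuous.homeoOfEquivCompactToT2 (f := Equiv.ofBijective f ⟨hinj, hsurj⟩) hcont⟩

/-- The one-point compactification of an uncountable, non-compact, locally compact,
non-Archimedean Polish group is homeomorphic to the Cantor space `2^ℕ`. -/
theorem onePoint_homeomorphic_cantor
    {G : Type*} [Group G] [TopologicalSpace G] [NonarchimedeanGroup G] [PolishSpace G]
    [LocallyCompactSpace G] [NoncompactSpace G] [Uncountable G] :
    Nonempty (OnePoint G ≃ₜ (ℕ → Bool)) := by
  have hbasis : TopologicalSpace.IsTopologicalBasis {K : Set G | IsOpen K ∧ IsCompact K} := by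
    refine TopologicalSpace.isTopologicalBasis_of_isOpen_of_nhds (fun u hu => hu.1) ?_
    intro g U hg hU
    obtain ⟨K, hK, hKU, hKc⟩ := local_compact_nhds (hU.mem_nhds hg)
    have h1 : (fun x => g * x) ⁻¹' K ∈ nhds (1 : G) := by
      apply (continuous_const_mul g).continuousAt.preimage_mem_nhds
      simpa using hK
    obtain ⟨V, hV⟩ := NonarchimedeanGroup.is_nonarchimedean _ h1
    have hVK : (fun x => g * x) '' (V : Set G) ⊆ K := Set.image_subset_iff.2 hV
    refine ⟨(fun x => g * x) '' (V : Set G), ⟨?_, ?_⟩, ⟨1, V.one_mem, by simp⟩, hVK.trans hKU⟩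
    · exact isOpenMap_mul_left g _ V.isOpen
    · exact hKc.of_isClosed_subset (isClosedMap_mul_left g _ V.isClosed) hVK
  obtain ⟨B, hBs, hBc, hB⟩ := hbasis.exists_countable
  have hne : B.Nonempty := by
    obtain ⟨K, hK, -⟩ := hB.exists_subset_of_mem_open (Set.mem_univ (1 : G)) isOpen_univ
    exact ⟨K, hK⟩
  obtain ⟨e, he⟩ := hBc.exists_eq_range hne
  have hp : ∀ x : G, (nhdsWithin x {x}ᶜ).NeBot := by
    intro x
    by_contra hx
    have hx' : IsOpen ({x} : Set G) := by
      rw [isOpen_singleton_iff_punctured_nhds]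
      exact Filter.not_neBot.1 hx
    have h1 : IsOpen ({1} : Set G) := by
      have := isOpenMap_mul_left x⁻¹ _ hx'
      simpa using this
    have : DiscreteTopology G := discreteTopology_of_isOpen_singleton_one h1
    have : Countable G := TopologicalSpace.separableSpace_iff_countable.1 inferInstance
    exact not_countable (α := G) this
  have hK : ∀ n, IsOpen (e n) ∧ IsCompact (e n) := fun n => hBs (he ▸ Set.mem_range_self n)
  have key : ∀ (x : G) (y : OnePoint G),
      (∀ n, (x : OnePoint G) ∈ ((↑) '' e n : Set (OnePoint G)) ↔
        y ∈ ((↑) '' e n : Set (OnePoint G))) → (x : OnePoint G) = y := by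
    intro x y h
    by_contra hxy
    have hop : IsOpen (((↑) : G → OnePoint G) ⁻¹' {y}ᶜ) :=
      isOpen_compl_singleton.preimage OnePoint.continuous_coe
    obtain ⟨K, hKB, hxK, hKs⟩ := hB.exists_subset_of_mem_open (a := x) hxy hop
    rw [he] at hKB
    obtain ⟨n, rfl⟩ := hKB
    obtain ⟨z, hz, hzy⟩ := (h n).1 ⟨x, hxK, rfl⟩
    exact hKs hz hzy
  refine cantor_of_separating (fun x => OnePoint.nhdsNE_neBot x)
    (fun n => ((↑) '' e n : Set (OnePoint G))) (fun n => ⟨?_, ?_⟩) ?_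
  · exact OnePoint.isClosed_image_coe.2 ⟨(hK n).2.isClosed, (hK n).2⟩
  · exact OnePoint.isOpen_image_coe.2 (hK n).1
  · intro x y h
    induction x using OnePoint.rec with
    | coe x => exact key x y h
    | infty =>
      induction y using OnePoint.rec with
      | coe y => exact (key y _ fun n => (h n).symm).symm
      | infty => rfl
end

section
/- Every Polish group admitting a neighborhood basis at the identity consisting of open subgroups has a compatible left-invariant metric taking values only in the set {0} ∪ {1/n : n ≥ 1}. -/
open Classical in
/-- The length function of a sequence of subgroups. -/
noncomputable def naLen {G : Type*} [Group G] (V : ℕ → Subgroup G) (g : G) : ℝ :=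
  if h : ∃ n, g ∉ V n then 1 / ((Nat.find h : ℝ) + 1) else 0

lemma naLen_ge {G : Type*} [Group G] (V : ℕ → Subgroup G) (g : G) (n : ℕ) (hg : g ∉ V n) :
    1 / ((n : ℝ) + 1) ≤ naLen V g := by
  classical
  have h : ∃ n, g ∉ V n := ⟨n, hg⟩
  rw [naLen, dif_pos h]
  have : ((Nat.find h : ℕ) : ℝ) ≤ n := by exact_mod_cast Nat.find_min' h hg
  exact one_div_le_one_div_of_le (by positivity) (by linarith)

lemma naLen_cases {G : Type*} [Group G] (V : ℕ → Subgroup G) (g : G) :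
    (naLen V g = 0 ∧ ∀ n, g ∈ V n) ∨ ∃ n : ℕ, g ∉ V n ∧ naLen V g = 1 / ((n : ℝ) + 1) := by
  classical
  by_cases h : ∃ n, g ∉ V n
  · right
    exact ⟨Nat.find h, Nat.find_spec h, by rw [naLen, dif_pos h]⟩
  · left
    refine ⟨by rw [naLen, dif_neg h], by simpa using h⟩

lemma naLen_nonneg {G : Type*} [Group G] (V : ℕ → Subgroup G) (g : G) : 0 ≤ naLen V g := by
  rcases naLen_cases V g with h | ⟨n, _, h⟩
  · exact h.1.ge
  · rw [h]; positivity

lemma naLen_lt {G : Type*} [Group G] (V : ℕ → Subgroup G) (g : G) (k : ℕ)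
    (hg : ∀ i ≤ k, g ∈ V i) : naLen V g < 1 / ((k : ℝ) + 1) := by
  rcases naLen_cases V g with h | ⟨n, hn, h⟩
  · rw [h.1]; positivity
  · rw [h]
    have : k < n := by
      by_contra hc
      exact hn (hg n (by omega))
    have : (k : ℝ) < n := by exact_mod_cast this
    exact one_div_lt_one_div_of_lt (by positivity) (by linarith)

/-- Every non-Archimedean Polish group admits a compatible left-invariant metric
taking values only in `{0} ∪ {1/n : n ≥ 1}`. -/
theorem nonarchimedean_compatible_metric
    {G : Type*} [Group G] [tG : TopologicalSpace G] [NonarchimedeanGroup G]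
    [PolishSpace G] :
    ∃ m : MetricSpace G,
      m.toUniformSpace.toTopologicalSpace = tG ∧
      (∀ g x y : G, m.toDist.dist (g * x) (g * y) = m.toDist.dist x y) ∧
      (∀ x y : G, m.toDist.dist x y = 0 ∨ ∃ n : ℕ, 1 ≤ n ∧ m.toDist.dist x y = 1 / n) := by
  obtain ⟨U, hU⟩ := (nhds (1 : G)).exists_antitone_basis
  choose W hW using fun n => NonarchimedeanGroup.is_nonarchimedean (U n) (hU.mem n)
  let V : ℕ → Subgroup G := fun n => (W n : Subgroup G)
  have hVn : ∀ n, (V n : Set G) ∈ nhds (1 : G) := fun n => (W n).mem_nhds_one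
  have hVU : ∀ s ∈ nhds (1 : G), ∃ n, (V n : Set G) ⊆ s := by
    intro s hs
    obtain ⟨n, hn⟩ := hU.mem_iff.1 hs
    exact ⟨n, (hW n).trans hn⟩
  let d : G → G → ℝ := fun x y => naLen V (x⁻¹ * y)
  have hself : ∀ x, d x x = 0 := by
    intro x
    rcases naLen_cases V (x⁻¹ * x) with h | ⟨n, hn, h⟩
    · exact h.1
    · exact absurd (by simp [one_mem]) hn
  have hle : ∀ x y, d x y ≤ d y x := by
    intro x y
    rcases naLen_cases V (x⁻¹ * y) with h | ⟨n, hn, h⟩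
    · exact h.1.le.trans (naLen_nonneg _ _)
    · refine h.le.trans (naLen_ge _ _ _ fun hc => hn ?_)
      simpa using (V n).inv_mem hc
  have htri : ∀ x y z, d x z ≤ d x y + d y z := by
    intro x y z
    have h1 : 0 ≤ d x y := naLen_nonneg _ _
    have h2 : 0 ≤ d y z := naLen_nonneg _ _
    rcases naLen_cases V (x⁻¹ * z) with h | ⟨n, hn, h⟩
    · exact h.1.le.trans (by linarith)
    · refine h.le.trans ?_
      by_cases hxy : x⁻¹ * y ∈ V n
      · have : 1 / ((n : ℝ) + 1) ≤ d y z := naLen_ge _ _ _ fun hc => hn (by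
          simpa [mul_assoc] using (V n).mul_mem hxy hc)
        linarith
      · have : 1 / ((n : ℝ) + 1) ≤ d x y := naLen_ge _ _ _ hxy
        linarith
  have hopen : ∀ s : Set G, IsOpen s ↔ ∀ x ∈ s, ∃ ε > 0, ∀ y, d x y < ε → y ∈ s := by
    intro s
    rw [isOpen_iff_mem_nhds]
    refine forall₂_congr fun x _ => ⟨fun hs => ?_, ?_⟩
    · have hc : Filter.Tendsto (fun g => x * g) (nhds 1) (nhds x) := by
        simpa using (continuous_const_mul x).tendsto (1 : G)
      obtain ⟨n, hn⟩ := hVU _ (hc hs)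
      refine ⟨1 / ((n : ℝ) + 1), by positivity, fun y hy => ?_⟩
      have hm : x⁻¹ * y ∈ V n := by
        by_contra hc
        exact absurd hy (not_lt.2 (naLen_ge _ _ _ hc))
      simpa using hn hm
    · rintro ⟨ε, hε, h⟩
      obtain ⟨k, hk⟩ := exists_nat_one_div_lt hε
      have hc : Filter.Tendsto (fun y => x⁻¹ * y) (nhds x) (nhds 1) := by
        simpa using (continuous_const_mul x⁻¹).tendsto x
      have hall : ∀ᶠ y in nhds x, ∀ i ∈ Set.Iic k, x⁻¹ * y ∈ V i :=
        (Filter.eventually_all_finite (Set.finite_Iic k)).2 fun i _ => hc (hVn i)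
      filter_upwards [hall] with y hy
      exact h y ((naLen_lt _ _ k hy).trans hk)
  have heq : ∀ x y, d x y = 0 → x = y := by
    intro x y hxy
    by_contra hne
    obtain ⟨n, hn⟩ := hVU {x⁻¹ * y}ᶜ (isOpen_compl_singleton.mem_nhds (by
      intro h
      exact hne (inv_mul_eq_one.1 (Set.mem_singleton_iff.1 h).symm)))
    have hm : x⁻¹ * y ∉ V n := fun hc => hn hc rfl
    have h1 : 1 / ((n : ℝ) + 1) ≤ d x y := naLen_ge _ _ _ hm
    have h2 : 0 < 1 / ((n : ℝ) + 1) := by positivity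
    linarith
  refine ⟨MetricSpace.ofDistTopology d hself (fun x y => (hle x y).antisymm (hle y x)) htri
    hopen heq, rfl, fun g x y => ?_, fun x y => ?_⟩
  · change naLen V _ = naLen V _
    congr 1
    group
  · change naLen V _ = 0 ∨ ∃ n : ℕ, 1 ≤ n ∧ naLen V _ = _
    rcases naLen_cases V (x⁻¹ * y) with h | ⟨n, _, h⟩
    · exact Or.inl h.1
    · exact Or.inr ⟨n + 1, by omega, by rw [h]; push_cast; rfl⟩
end
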